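/- arXiv:math/0602316 — 11 statements merged into one kernel-verified Lean document; each statement's English description precedes it below -/
import Mathlib

section
/- λ' ∘ ρ' = id_H, and ρ' ∘ λ' = id_E + D ∘ κ' + κ' ∘ D. (Thus λ' and ρ' are mutually inverse homotopy equivalences up to the homotopy κ'.) -/
/-!
Since `κ'` both begins and ends with `κ`, the side conditions give `lam κ' = 0` and `κ' ρ = 0`;
together with `κ' κ' = 0` this reduces `lam' ρ'` to `lam ρ = id`.

For the homotopy, `(1 + κ'δ)(1 + dκ + κd)(1 + δκ')` expands, using `κ(1 + δκ') = κ' = (1 + κ'δ)κ`,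
to `1 + Dκ' + κ'D + κ'(dδ + δd + δδ)κ'`, and the last term vanishes because `D² = d² = 0`.
-/

/-- Differential perturbation lemma, part (1):
`λ' ∘ ρ' = id_H` and `ρ' ∘ λ' = id_E + D ∘ κ' + κ' ∘ D`. -/
theorem perturbation_homotopy_equivalence
    {S E H : Type*} [Ring S]
    [AddCommGroup E] [Module S E] [AddCommGroup H] [Module S H]
    (d κ δ κ' εl εr D : E →ₗ[S] E)
    (lam lam' : E →ₗ[S] H) (ρ ρ' : H →ₗ[S] E)
    (h1 : lam ∘ₗ ρ = LinearMap.id)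
    (h2 : ρ ∘ₗ lam = LinearMap.id + d ∘ₗ κ + κ ∘ₗ d)
    (hκκ : κ ∘ₗ κ = 0) (hdd : d ∘ₗ d = 0)
    (hld : lam ∘ₗ d = 0) (hdρ : d ∘ₗ ρ = 0)
    (hlk : lam ∘ₗ κ = 0) (hκρ : κ ∘ₗ ρ = 0)
    (hD : D = d + δ) (hDD : D ∘ₗ D = 0)
    (hεl : εl = δ ∘ₗ κ') (hεr : εr = κ' ∘ₗ δ)
    (hκ'l : κ' = κ ∘ₗ (LinearMap.id + εl))
    (hκ'r : κ' = (LinearMap.id + εr) ∘ₗ κ)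
    (hκ'κ' : κ' ∘ₗ κ' = 0)
    (hlam' : lam' = lam ∘ₗ (LinearMap.id + εl))
    (hρ' : ρ' = (LinearMap.id + εr) ∘ₗ ρ) :
    lam' ∘ₗ ρ' = LinearMap.id ∧
      ρ' ∘ₗ lam' = LinearMap.id + D ∘ₗ κ' + κ' ∘ₗ D := by
  have hlk' : lam ∘ₗ κ' = 0 := by
    rw [hκ'l, ← LinearMap.comp_assoc, hlk, LinearMap.zero_comp]
  have hκρ' : κ' ∘ₗ ρ = 0 := by
    rw [hκ'r, LinearMap.comp_assoc, hκρ, LinearMap.comp_zero]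
  constructor
  · ext x
    have a1 := fun y => LinearMap.congr_fun hlk' y
    have a2 := fun y => LinearMap.congr_fun hκρ' y
    have a3 := fun y => LinearMap.congr_fun hκ'κ' y
    have a4 := fun y => LinearMap.congr_fun h1 y
    simp only [LinearMap.comp_apply, LinearMap.zero_apply, LinearMap.id_apply] at a1 a2 a3 a4
    simp [hlam', hρ', hεl, hεr, a1, a2, a3, a4]
  · have hassoc : ρ' ∘ₗ lam' =
        (LinearMap.id + εr) ∘ₗ (ρ ∘ₗ lam) ∘ₗ (LinearMap.id + εl) := by
      rw [hρ', hlam']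
      rfl
    rw [hassoc, h2]
    -- The remaining identity lives in the ring `Module.End S E`.
    subst hD hεl hεr
    simp only [← Module.End.mul_eq_comp, ← Module.End.one_eq_id] at *
    have hcurv : d * δ + δ * d + δ * δ = 0 := by
      calc d * δ + δ * d + δ * δ = (d + δ) * (d + δ) - d * d := by noncomm_ring
        _ = 0 := by rw [hDD, hdd, sub_zero]
    calc (1 + κ' * δ) * ((1 + d * κ + κ * d) * (1 + δ * κ'))
        = (1 + κ' * δ) * (1 + δ * κ') + (1 + κ' * δ) * d * (κ * (1 + δ * κ'))
          + ((1 + κ' * δ) * κ) * d * (1 + δ * κ') := by noncomm_ring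
      _ = (1 + κ' * δ) * (1 + δ * κ') + (1 + κ' * δ) * d * κ'
          + κ' * d * (1 + δ * κ') := by rw [← hκ'l, ← hκ'r]
      _ = 1 + (d + δ) * κ' + κ' * (d + δ) + κ' * (d * δ + δ * d + δ * δ) * κ' := by
          noncomm_ring
      _ = 1 + (d + δ) * κ' + κ' * (d + δ) := by rw [hcurv, mul_zero, zero_mul, add_zero]
end

section
/- The four S-linear maps H → H given by λ' ∘ D ∘ ρ, λ' ∘ δ ∘ ρ, λ ∘ D ∘ ρ', and λ ∘ δ ∘ ρ' all coincide; i.e. the perturbed differential ∂ on H is equally computed by any of these four formulas. -/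
/-- Differential perturbation lemma, part (2): the four formulas
`λ' ∘ D ∘ ρ`, `λ' ∘ δ ∘ ρ`, `λ ∘ D ∘ ρ'`, `λ ∘ δ ∘ ρ'` define the same operator on `H`. -/
theorem perturbation_differential_four_formulas
    {S E H : Type*} [Ring S]
    [AddCommGroup E] [Module S E] [AddCommGroup H] [Module S H]
    (d κ δ κ' εl εr D : E →ₗ[S] E)
    (lam lam' : E →ₗ[S] H) (ρ ρ' : H →ₗ[S] E)
    (h1 : lam ∘ₗ ρ = LinearMap.id)
    (h2 : ρ ∘ₗ lam = LinearMap.id + d ∘ₗ κ + κ ∘ₗ d)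
    (hκκ : κ ∘ₗ κ = 0) (hdd : d ∘ₗ d = 0)
    (hld : lam ∘ₗ d = 0) (hdρ : d ∘ₗ ρ = 0)
    (hlk : lam ∘ₗ κ = 0) (hκρ : κ ∘ₗ ρ = 0)
    (hD : D = d + δ) (hDD : D ∘ₗ D = 0)
    (hεl : εl = δ ∘ₗ κ') (hεr : εr = κ' ∘ₗ δ)
    (hκ'l : κ' = κ ∘ₗ (LinearMap.id + εl))
    (hκ'r : κ' = (LinearMap.id + εr) ∘ₗ κ)
    (hκ'κ' : κ' ∘ₗ κ' = 0)
    (hlam' : lam' = lam ∘ₗ (LinearMap.id + εl))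
    (hρ' : ρ' = (LinearMap.id + εr) ∘ₗ ρ) :
    lam' ∘ₗ D ∘ₗ ρ = lam' ∘ₗ δ ∘ₗ ρ ∧
      lam' ∘ₗ δ ∘ₗ ρ = lam ∘ₗ D ∘ₗ ρ' ∧
      lam ∘ₗ D ∘ₗ ρ' = lam ∘ₗ δ ∘ₗ ρ' := by
  have hDρ : D ∘ₗ ρ = δ ∘ₗ ρ := by rw [hD, LinearMap.add_comp, hdρ, zero_add]
  have hlamD : lam ∘ₗ D = lam ∘ₗ δ := by rw [hD, LinearMap.comp_add, hld, zero_add]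
  -- Both sides expand to `lam δ ρ + lam δ κ' δ ρ`.
  have hmid : lam' ∘ₗ δ ∘ₗ ρ = lam ∘ₗ δ ∘ₗ ρ' := by
    rw [hlam', hρ', hεl, hεr]
    ext x
    simp
  have hlamDρ' : lam ∘ₗ D ∘ₗ ρ' = lam ∘ₗ δ ∘ₗ ρ' := by
    rw [← LinearMap.comp_assoc, hlamD, LinearMap.comp_assoc]
  exact ⟨by rw [hDρ], hmid.trans hlamDρ'.symm, hlamDρ'⟩
end

section
/- ∂ ∘ ∂ = 0, i.e. the induced operator ∂ = λ' ∘ δ ∘ ρ provides H with a differential. -/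
/-!
Put `A = δ + δκ'δ`, so that `∂ = λ A ρ` and `∂∂ = λ A (ρλ) A ρ` with `ρλ = 1 + dκ + κd`. The heart of
the matter is the identity `A (ρλ) A = -(dA + Ad)` in the endomorphism ring of `E`
(`perturbed_sandwich`); since `λ d = 0` and `d ρ = 0`, composing it with `λ` on the left and `ρ` on
the right gives `∂∂ = 0`.
-/

/-- With `u = 1 + δκ'` and `v = 1 + κ'δ` one has `A = uδ = δv`, `κA = κ'δ` and `Aκ = δκ'`, whence
`A(1 + dκ + κd)A + dA + Ad = A² + u(dδ + δd)v = A² - uδδv = 0`. -/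
theorem perturbed_sandwich {R : Type*} [Ring R] {d κ δ κ' : R}
    (hδ : d * δ + δ * d + δ * δ = 0)
    (hl : κ * (1 + δ * κ') = κ') (hr : (1 + κ' * δ) * κ = κ') :
    (δ + δ * κ' * δ) * (1 + d * κ + κ * d) * (δ + δ * κ' * δ) =
      -(d * (δ + δ * κ' * δ) + (δ + δ * κ' * δ) * d) := by
  have hκA : κ * (δ + δ * κ' * δ) = κ' * δ := by
    refine Eq.trans ?_ (congrArg (· * δ) hl)
    noncomm_ring
  have hAκ : (δ + δ * κ' * δ) * κ = δ * κ' := by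
    refine Eq.trans ?_ (congrArg (δ * ·) hr)
    noncomm_ring
  have huv : (1 + δ * κ') * (d * δ + δ * d + δ * δ) * (1 + κ' * δ) = 0 := by
    rw [hδ]; simp
  generalize hA : δ + δ * κ' * δ = A at *
  have hu : (1 + δ * κ') * δ = A := by rw [← hA]; noncomm_ring
  have hv : δ * (1 + κ' * δ) = A := by rw [← hA]; noncomm_ring
  rw [eq_neg_iff_add_eq_zero]
  calc A * (1 + d * κ + κ * d) * A + (d * A + A * d)
      = A * A + A * d * (κ * A) + (A * κ) * d * A + (d * A + A * d) := by noncomm_ring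
    _ = (1 + δ * κ') * d * A + A * d * (1 + κ' * δ) + A * A := by
        rw [hκA, hAκ]; noncomm_ring
    _ = (1 + δ * κ') * d * (δ * (1 + κ' * δ)) + ((1 + δ * κ') * δ) * d * (1 + κ' * δ)
          + ((1 + δ * κ') * δ) * (δ * (1 + κ' * δ)) := by rw [hu, hv]
    _ = (1 + δ * κ') * (d * δ + δ * d + δ * δ) * (1 + κ' * δ) := by
        generalize 1 + δ * κ' = u
        generalize 1 + κ' * δ = v
        noncomm_ring
    _ = 0 := huv

/-- Differential perturbation lemma, part (3): `∂ ∘ ∂ = 0`, where `∂ = λ' ∘ δ ∘ ρ`. -/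
theorem perturbation_differential_squares_to_zero
    {S E H : Type*} [Ring S]
    [AddCommGroup E] [Module S E] [AddCommGroup H] [Module S H]
    (d κ δ κ' εl εr D : E →ₗ[S] E)
    (lam lam' : E →ₗ[S] H) (ρ ρ' : H →ₗ[S] E)
    (h1 : lam ∘ₗ ρ = LinearMap.id)
    (h2 : ρ ∘ₗ lam = LinearMap.id + d ∘ₗ κ + κ ∘ₗ d)
    (hκκ : κ ∘ₗ κ = 0) (hdd : d ∘ₗ d = 0)
    (hld : lam ∘ₗ d = 0) (hdρ : d ∘ₗ ρ = 0)
    (hlk : lam ∘ₗ κ = 0) (hκρ : κ ∘ₗ ρ = 0)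
    (hD : D = d + δ) (hDD : D ∘ₗ D = 0)
    (hεl : εl = δ ∘ₗ κ') (hεr : εr = κ' ∘ₗ δ)
    (hκ'l : κ' = κ ∘ₗ (LinearMap.id + εl))
    (hκ'r : κ' = (LinearMap.id + εr) ∘ₗ κ)
    (hκ'κ' : κ' ∘ₗ κ' = 0)
    (hlam' : lam' = lam ∘ₗ (LinearMap.id + εl))
    (hρ' : ρ' = (LinearMap.id + εr) ∘ₗ ρ) :
    (lam' ∘ₗ δ ∘ₗ ρ) ∘ₗ (lam' ∘ₗ δ ∘ₗ ρ) = 0 := by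
  subst hD hεl hεr hlam'
  have hδ : d * δ + δ * d + δ * δ = (0 : Module.End S E) := by
    have h : (d + δ) * (d + δ) = (0 : Module.End S E) := hDD
    have h' : d * d = (0 : Module.End S E) := hdd
    rw [mul_add, add_mul, add_mul, h', zero_add] at h
    rw [← h]; abel
  have key := perturbed_sandwich (R := Module.End S E) hδ hκ'l.symm hκ'r.symm
  have hP : (1 + d * κ + κ * d : Module.End S E) = ρ ∘ₗ lam := h2.symm
  rw [hP] at key
  ext x
  have hld' (y : E) : lam (d y) = 0 := LinearMap.congr_fun hld y
  have hdρ' : d (ρ x) = 0 := LinearMap.congr_fun hdρ x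
  simpa [hld', hdρ'] using congrArg lam (LinearMap.congr_fun key (ρ x))
end

section
/- ∂ ∘ λ' = λ' ∘ D and ρ' ∘ ∂ = D ∘ ρ'; i.e. λ' : (E, D) → (H, ∂) and ρ' : (H, ∂) → (E, D) are morphisms of complexes. -/
/-!
Write `A = 1 + δκ'` and `B = 1 + κ'δ`, so that `λ' = λA`, `ρ' = Bρ`, `κA = κ' = Bκ` and `Aδ = δB`.
Expanding `D² = 0` with `d² = 0` gives `δδ + δd + dδ = 0`. Substituting `ρλ = 1 + dκ + κd`:

* `λ'δρλ' = λAδ(1 + dκ + κd)A = λA(δA + δdκ' + dA)`, since `Aδκ = A - 1` and `λd = 0`;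
  the terms in `κ'` add up to `(δδ + δd + dδ)κ' = 0`, which leaves `λA(δ + d)`.
* `ρλ'δρ = (1 + dκ + κd)δBρ = (δ + d + κdδ)Bρ`, since `κδB = B - 1` and `dρ = 0`;
  applying `B` on the left gives `(δ + d)Bρ + κ'(δδ + δd + dδ)Bρ = (δ + d)Bρ`.
-/

/-- Differential perturbation lemma, part (4): `λ'` and `ρ'` are morphisms of complexes:
`∂ ∘ λ' = λ' ∘ D` and `ρ' ∘ ∂ = D ∘ ρ'`, where `∂ = λ' ∘ δ ∘ ρ`. -/
theorem perturbation_chain_maps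
    {S E H : Type*} [Ring S]
    [AddCommGroup E] [Module S E] [AddCommGroup H] [Module S H]
    (d κ δ κ' εl εr D : E →ₗ[S] E)
    (lam lam' : E →ₗ[S] H) (ρ ρ' : H →ₗ[S] E)
    (h1 : lam ∘ₗ ρ = LinearMap.id)
    (h2 : ρ ∘ₗ lam = LinearMap.id + d ∘ₗ κ + κ ∘ₗ d)
    (hκκ : κ ∘ₗ κ = 0) (hdd : d ∘ₗ d = 0)
    (hld : lam ∘ₗ d = 0) (hdρ : d ∘ₗ ρ = 0)
    (hlk : lam ∘ₗ κ = 0) (hκρ : κ ∘ₗ ρ = 0)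
    (hD : D = d + δ) (hDD : D ∘ₗ D = 0)
    (hεl : εl = δ ∘ₗ κ') (hεr : εr = κ' ∘ₗ δ)
    (hκ'l : κ' = κ ∘ₗ (LinearMap.id + εl))
    (hκ'r : κ' = (LinearMap.id + εr) ∘ₗ κ)
    (hκ'κ' : κ' ∘ₗ κ' = 0)
    (hlam' : lam' = lam ∘ₗ (LinearMap.id + εl))
    (hρ' : ρ' = (LinearMap.id + εr) ∘ₗ ρ) :
    (lam' ∘ₗ δ ∘ₗ ρ) ∘ₗ lam' = lam' ∘ₗ D ∧
      ρ' ∘ₗ (lam' ∘ₗ δ ∘ₗ ρ) = D ∘ₗ ρ' := by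
  subst hD hεl hεr
  have H2 : ∀ x, ρ (lam x) = x + d (κ x) + κ (d x) := fun x => by
    simpa using LinearMap.congr_fun h2 x
  have Hld : ∀ x, lam (d x) = 0 := fun x => by simpa using LinearMap.congr_fun hld x
  have Hdρ : ∀ x, d (ρ x) = 0 := fun x => by simpa using LinearMap.congr_fun hdρ x
  have Hl : ∀ x, κ' x = κ (x + δ (κ' x)) := fun x => by
    simpa using LinearMap.congr_fun hκ'l x
  have Hr : ∀ x, κ' x = κ x + κ' (δ (κ x)) := fun x => by
    simpa using LinearMap.congr_fun hκ'r x
  have Hlam : ∀ x, lam' x = lam (x + δ (κ' x)) := fun x => by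
    simpa using LinearMap.congr_fun hlam' x
  have Hρ : ∀ x, ρ' x = ρ x + κ' (δ (ρ x)) := fun x => by
    simpa using LinearMap.congr_fun hρ' x
  have HD : ∀ x, δ (δ x) + δ (d x) + d (δ x) = 0 := fun x => by
    have e := LinearMap.congr_fun hDD x
    have e' : d (d x) = 0 := by simpa using LinearMap.congr_fun hdd x
    simp only [LinearMap.comp_apply, LinearMap.add_apply, map_add, e', LinearMap.zero_apply] at e
    rw [← e]; abel
  constructor
  · ext x
    -- `λAδκ = λA - λ`
    have Hk : ∀ z, lam' (δ (κ z)) = lam' z - lam z := fun z => by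
      rw [Hlam, Hlam, ← map_add δ, ← Hr, map_add, add_sub_cancel_left]
    have e := congrArg lam' (HD (κ' x))
    simp only [map_add, map_zero] at e
    simp only [LinearMap.comp_apply, LinearMap.add_apply]
    rw [Hlam x, H2, ← Hl]
    simp only [map_add, Hk, Hld, sub_zero]
    rw [← sub_eq_zero, ← e]
    abel
  · ext h
    simp only [LinearMap.comp_apply, LinearMap.add_apply]
    have ez : lam' (δ (ρ h)) = lam (δ (ρ' h)) := by rw [Hlam, Hρ, map_add δ]
    -- `κδB = B - 1`, and `d` annihilates the image of `ρ`
    have ek : d (κ (δ (ρ' h))) = d (ρ' h) := by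
      rw [Hρ, map_add δ, ← Hl, map_add d, Hdρ, zero_add]
    have er : ρ (lam' (δ (ρ h))) = δ (ρ' h) + d (ρ' h) + κ (d (δ (ρ' h))) := by
      rw [ez, H2, ek]
    have e := congrArg κ' (HD (ρ' h))
    simp only [map_add, map_zero] at e
    rw [Hr (d (δ (ρ' h)))] at e
    rw [Hρ (lam' (δ (ρ h))), er]
    simp only [map_add]
    rw [← sub_eq_zero, ← e]
    abel
end

section
/- ε_ρ ∘ ε_λ = −(κ' ∘ d ∘ ε_λ) − (ε_ρ ∘ d ∘ κ') as S-linear maps E → E. -/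
/-- The auxiliary identity `ε_ρ ∘ ε_λ = −κ' ∘ d ∘ ε_λ − ε_ρ ∘ d ∘ κ'` used in the proof
of the differential perturbation lemma. -/
theorem perturbation_epsilon_identity
    {S E H : Type*} [Ring S]
    [AddCommGroup E] [Module S E] [AddCommGroup H] [Module S H]
    (d κ δ κ' εl εr D : E →ₗ[S] E)
    (lam lam' : E →ₗ[S] H) (ρ ρ' : H →ₗ[S] E)
    (h1 : lam ∘ₗ ρ = LinearMap.id)
    (h2 : ρ ∘ₗ lam = LinearMap.id + d ∘ₗ κ + κ ∘ₗ d)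
    (hκκ : κ ∘ₗ κ = 0) (hdd : d ∘ₗ d = 0)
    (hld : lam ∘ₗ d = 0) (hdρ : d ∘ₗ ρ = 0)
    (hlk : lam ∘ₗ κ = 0) (hκρ : κ ∘ₗ ρ = 0)
    (hD : D = d + δ) (hDD : D ∘ₗ D = 0)
    (hεl : εl = δ ∘ₗ κ') (hεr : εr = κ' ∘ₗ δ)
    (hκ'l : κ' = κ ∘ₗ (LinearMap.id + εl))
    (hκ'r : κ' = (LinearMap.id + εr) ∘ₗ κ)
    (hκ'κ' : κ' ∘ₗ κ' = 0)
    (hlam' : lam' = lam ∘ₗ (LinearMap.id + εl))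
    (hρ' : ρ' = (LinearMap.id + εr) ∘ₗ ρ) :
    εr ∘ₗ εl = -(κ' ∘ₗ d ∘ₗ εl) - εr ∘ₗ d ∘ₗ κ' := by
  subst hεl hεr hD
  -- Since `d² = 0`, `D² = 0` reads `δδ = -dδ - δd`; composing this with the perturbed
  -- homotopy on both sides gives the claim.
  ext x
  have hd : d (d (κ' x)) = 0 := LinearMap.congr_fun hdd (κ' x)
  have hx := LinearMap.congr_fun hDD (κ' x)
  simp only [LinearMap.comp_apply, LinearMap.add_apply, map_add, hd, LinearMap.zero_apply,
    zero_add] at hx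
  have hk := congrArg κ' hx
  simp only [map_add, map_zero] at hk
  simp only [LinearMap.comp_apply, LinearMap.sub_apply, LinearMap.neg_apply]
  rw [← sub_eq_zero, ← hk]
  abel
end

section
/- There exist S-linear maps κ', ε_λ, ε_ρ : E → E (given by the then-convergent series κ' = κ + κδκ + κδκδκ + ⋯, ε_λ = Σ_{m≥1}(δκ)^m, ε_ρ = Σ_{m≥1}(κδ)^m) satisfying ε_λ = δ ∘ κ', ε_ρ = κ' ∘ δ, κ' = κ ∘ (id_E + ε_λ), κ' = (id_E + ε_ρ) ∘ κ, and κ' ∘ κ' = 0. -/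
/-!
Put `N = δκ`. Local nilpotence makes `1 - N` bijective: `N e = e` forces `e = N ^ m e = 0`, and
the finite geometric sum `∑ i < m, N ^ i e` is a preimage of `e` whenever `N ^ m e = 0`. Its inverse
`G` is the sum of the geometric series of `N`, so `κ' = κG`. The identities
`G = 1 + NG = 1 + GN` yield the two recursive formulas for `κ'`. The second one, `κG = (1 + εr)κ`,
gives `κGκ = (1 + εr)κκ = 0`, hence `κ'κ' = κGκG = 0`.
-/

/-- A pointwise version of `IsNilpotent.isUnit_one_sub`. -/
theorem isUnit_one_sub_of_locally_nilpotent {S E : Type*} [Ring S] [AddCommGroup E] [Module S E]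
    (N : Module.End S E) (hN : ∀ e : E, ∃ m : ℕ, (N ^ m) e = 0) : IsUnit (1 - N) := by
  rw [Module.End.isUnit_iff]
  constructor
  · rw [injective_iff_map_eq_zero]
    intro e he
    have hfix : N e = e := (sub_eq_zero.mp he).symm
    obtain ⟨m, hm⟩ := hN e
    rw [← hm, Module.End.pow_apply, Function.iterate_fixed hfix]
  · intro e
    obtain ⟨m, hm⟩ := hN e
    refine ⟨(∑ i ∈ Finset.range m, N ^ i) e, ?_⟩
    rw [← Module.End.mul_apply, mul_neg_geom_sum]
    simp [hm]

/-- Convergence of the perturbation series: if `δ ∘ κ` is locally nilpotent, then there exist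
linear maps `κ' = κ + κδκ + κδκδκ + ⋯`, `ε_λ = Σ_{m≥1} (δκ)^m`, `ε_ρ = Σ_{m≥1} (κδ)^m`
satisfying the closed-form equations `ε_λ = δ ∘ κ'`, `ε_ρ = κ' ∘ δ`,
`κ' = κ ∘ (id + ε_λ)`, `κ' = (id + ε_ρ) ∘ κ`, and `κ' ∘ κ' = 0`. -/
theorem perturbation_series_exists
    {S E H : Type*} [Ring S]
    [AddCommGroup E] [Module S E] [AddCommGroup H] [Module S H]
    (d κ δ : E →ₗ[S] E)
    (lam : E →ₗ[S] H) (ρ : H →ₗ[S] E)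
    (h1 : lam ∘ₗ ρ = LinearMap.id)
    (h2 : ρ ∘ₗ lam = LinearMap.id + d ∘ₗ κ + κ ∘ₗ d)
    (hκκ : κ ∘ₗ κ = 0) (hdd : d ∘ₗ d = 0)
    (hld : lam ∘ₗ d = 0) (hdρ : d ∘ₗ ρ = 0)
    (hlk : lam ∘ₗ κ = 0) (hκρ : κ ∘ₗ ρ = 0)
    (hnil : ∀ e : E, ∃ m : ℕ, ((δ ∘ₗ κ : Module.End S E) ^ m) e = 0) :
    ∃ κ' εl εr : E →ₗ[S] E,
      εl = δ ∘ₗ κ' ∧ εr = κ' ∘ₗ δ ∧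
      κ' = κ ∘ₗ (LinearMap.id + εl) ∧
      κ' = (LinearMap.id + εr) ∘ₗ κ ∧
      κ' ∘ₗ κ' = 0 := by
  obtain ⟨u, hu⟩ := isUnit_one_sub_of_locally_nilpotent (S := S) (δ ∘ₗ κ) hnil
  obtain ⟨G, hG₁, hG₂⟩ : ∃ G : Module.End S E, (1 - δ * κ) * G = 1 ∧ G * (1 - δ * κ) = 1 :=
    ⟨↑u⁻¹, by rw [Module.End.mul_eq_comp δ κ, ← hu, u.mul_inv],
      by rw [Module.End.mul_eq_comp δ κ, ← hu, u.inv_mul]⟩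
  have hleft : 1 + δ * (κ * G) = G := by
    rw [← hG₁]; noncomm_ring
  have hright : 1 + G * (δ * κ) = G := by
    rw [← hG₂]; noncomm_ring
  have hκG : κ * G = (1 + κ * G * δ) * κ :=
    calc κ * G = κ * (1 + G * (δ * κ)) := by rw [hright]
      _ = (1 + κ * G * δ) * κ := by noncomm_ring
  refine ⟨κ * G, δ * (κ * G), κ * G * δ, rfl, rfl, ?_, hκG, ?_⟩
  · change κ * G = κ * (1 + δ * (κ * G))
    rw [hleft]
  · change κ * G * (κ * G) = 0
    have hκκ' : κ * κ = 0 := hκκ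
    rw [← mul_assoc, hκG, mul_assoc _ κ κ, hκκ', mul_zero, zero_mul]
end

section
/- Every Lie subalgebra of a free Lie algebra is itself a free Lie algebra: for every Lie subalgebra L of the free Lie algebra FreeLieAlgebra K X on a type X, there exists a type Y and an isomorphism of Lie algebras over K between L and the free Lie algebra FreeLieAlgebra K Y. -/
/-!
Write `T` for the free associative algebra on `X`, graded by word length, and `inc` for the
canonical map from the free Lie algebra to `T`.

In characteristic zero the Dynkin operator, which brackets words to the right, shows that `inc`
is injective (`inc_injective`) and that its image is the space of primitive elements of `T`
(Friedrichs' criterion, `exists_inc_of_isPrim`). In particular the homogeneous components of a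
Lie element are Lie elements (`proj_inc_mem`).

Given a Lie subalgebra `L`, let `lead L n` be the space of leading terms of degree `n` of its
elements; it consists of primitive elements. Choose homogeneous elements `b j`, of degree `d j`,
whose classes form a basis of the leading terms modulo the decomposable part of the right ideal
`R` of `T` that these generate (`IsMinGen`). Then `R` is a free right module on the `b j`: from a
relation `∑ b j * a j = 0` minimality forces the constant terms of all `a j` to vanish, and
stripping a final letter then yields another relation of the same shape
(`IsMinGen.eq_zero_of_sum`). Two consequences follow.

* The `b j` generate a free associative subalgebra of `T` (`IsMinGen.subst_injective`).
* This subalgebra contains all leading terms. Indeed an element `a` whose coproduct is `a ⊗ 1`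
  modulo `T ⊗ R` is, by the counit law, a constant plus an element `∑ b j * c j` of `R`; by
  freeness the `c j`, of smaller degree, satisfy the same condition, so that induction on the
  degree applies (`IsMinGen.mem_range_of_isCoinv`). Primitive elements of `R` are of this kind.

By Friedrichs' criterion in the free algebra on the `b j`, each leading term is even a Lie
polynomial in the `b j` (`IsMinGen.exists_lie`). Lifting each `b j` to an element `y j` of `L`
with that leading term, a comparison of leading terms shows that the `y j` generate `L` as a Lie
algebra and satisfy no relations (`exists_lift_bijective`).
-/

universe u v

noncomputable section

namespace ShirshovWitt

open scoped TensorProduct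
open Module

attribute [local instance] LieRing.ofAssociativeRing

variable {K : Type u} [Field K] {X : Type v}

/-! ### Words and weights in the free associative algebra -/

variable (K X) in
/-- The basis of the free associative algebra consisting of the words in the letters `X`. -/
def word : Basis (List X) K (FreeAlgebra K X) :=
  (FreeAlgebra.basisFreeMonoid K X).reindex FreeMonoid.toList

@[simp] lemma word_nil : word K X [] = 1 := by
  simp only [word, FreeAlgebra.basisFreeMonoid, Basis.reindex_apply, Basis.map_apply,
    FreeMonoid.toList_symm, FreeMonoid.ofList_nil]
  simp [← MonoidAlgebra.one_def]

@[simp] lemma word_append (u w : List X) : word K X (u ++ w) = word K X u * word K X w := by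
  simp [word, FreeAlgebra.basisFreeMonoid, ← map_mul, MonoidAlgebra.single_mul_single]

@[simp] lemma word_singleton (x : X) : word K X [x] = FreeAlgebra.ι K x := by
  simp only [word, FreeAlgebra.basisFreeMonoid, Basis.reindex_apply, Basis.map_apply,
    FreeMonoid.toList_symm, FreeMonoid.ofList_singleton]
  simp [FreeAlgebra.equivMonoidAlgebraFreeMonoid]

@[simp] lemma word_cons (x : X) (w : List X) :
    word K X (x :: w) = FreeAlgebra.ι K x * word K X w := by
  rw [← word_singleton, ← word_append]; rfl

lemma word_concat (x : X) (w : List X) :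
    word K X (w ++ [x]) = word K X w * FreeAlgebra.ι K x := by
  simp

/-- A linear condition on the free associative algebra may be checked on words. -/
lemma word_mem {p : Submodule K (FreeAlgebra K X)} (h : ∀ w, word K X w ∈ p)
    (a : FreeAlgebra K X) : a ∈ p := by
  have : Submodule.span K (Set.range (word K X)) ≤ p := by
    rw [Submodule.span_le]; rintro _ ⟨w, rfl⟩; exact h w
  exact this ((word K X).mem_span a)

variable (K X) in
/-- The augmentation, i.e. the constant term. -/
def aug : FreeAlgebra K X →ₐ[K] K := FreeAlgebra.lift K (fun _ => 0)

@[simp] lemma aug_ι (x : X) : aug K X (FreeAlgebra.ι K x) = 0 := by simp [aug]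

lemma aug_eq_repr (a : FreeAlgebra K X) : aug K X a = (word K X).repr a [] := by
  have : (aug K X).toLinearMap = (word K X).coord [] := by
    refine (word K X).ext fun w => ?_
    cases w with
    | nil => rw [Basis.coord_apply, Basis.repr_self]; simp
    | cons x w => rw [Basis.coord_apply, Basis.repr_self]; simp
  exact LinearMap.congr_fun this a

/-- The weight of a word, when each letter `x` has weight `d x`. -/
def wt (d : X → ℕ) (w : List X) : ℕ := (w.map d).sum

@[simp] lemma wt_nil (d : X → ℕ) : wt d [] = 0 := rfl
@[simp] lemma wt_cons (d : X → ℕ) (x : X) (w : List X) : wt d (x :: w) = d x + wt d w := by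
  simp [wt]
@[simp] lemma wt_append (d : X → ℕ) (u w : List X) : wt d (u ++ w) = wt d u + wt d w := by
  simp [wt]

variable (K) in
/-- The span of the words whose weight lies in `s`. In particular `wtPart K d {n}` is the
homogeneous component of degree `n`, and `wtPart K d (Set.Iio n)` is the space of elements of
degree less than `n`. -/
def wtPart (d : X → ℕ) (s : Set ℕ) : Submodule K (FreeAlgebra K X) :=
  Submodule.span K (word K X '' {w | wt d w ∈ s})

lemma mem_wtPart {d : X → ℕ} {s : Set ℕ} {a : FreeAlgebra K X} :
    a ∈ wtPart K d s ↔ ∀ w, (word K X).repr a w ≠ 0 → wt d w ∈ s := by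
  rw [wtPart, Basis.mem_span_image]
  simp [Set.subset_def]

lemma word_mem_wtPart {d : X → ℕ} {s : Set ℕ} {w : List X} (h : wt d w ∈ s) :
    word K X w ∈ wtPart K d s :=
  Submodule.subset_span ⟨w, h, rfl⟩

lemma wtPart_mono {d : X → ℕ} {s t : Set ℕ} (h : s ⊆ t) : wtPart K d s ≤ wtPart K d t :=
  Submodule.span_mono (Set.image_mono fun _ hw => h hw)

lemma wtPart_empty {d : X → ℕ} {s : Set ℕ} (hs : s = ∅) {a : FreeAlgebra K X}
    (h : a ∈ wtPart K d s) : a = 0 := by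
  subst hs
  simpa [wtPart] using h

lemma wtPart_disjoint {d : X → ℕ} {s t : Set ℕ} (hst : s ∩ t = ∅) {a : FreeAlgebra K X}
    (hs : a ∈ wtPart K d s) (ht : a ∈ wtPart K d t) : a = 0 := by
  refine wtPart_empty (d := d) hst (mem_wtPart.2 fun w hw => ?_)
  exact ⟨mem_wtPart.1 hs w hw, mem_wtPart.1 ht w hw⟩

lemma mul_mem_wtPart {d : X → ℕ} {s t r : Set ℕ} (h : ∀ i ∈ s, ∀ j ∈ t, i + j ∈ r)
    {a b : FreeAlgebra K X} (ha : a ∈ wtPart K d s) (hb : b ∈ wtPart K d t) :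
    a * b ∈ wtPart K d r := by
  have : wtPart K d s * wtPart K d t ≤ wtPart K d r := by
    rw [wtPart, wtPart, Submodule.span_mul_span, Submodule.span_le]
    rintro _ ⟨_, ⟨u, hu, rfl⟩, _, ⟨w, hw, rfl⟩, rfl⟩
    simp only [← word_append]
    exact word_mem_wtPart (by simpa using h _ hu _ hw)
  exact this (Submodule.mul_mem_mul ha hb)

/-- The diagonal operator multiplying a word `w` by `c (wt d w)`. It specializes to the Euler
operator, to its partial inverse and to the projections on homogeneous components. -/
def scal (d : X → ℕ) (c : ℕ → K) : FreeAlgebra K X →ₗ[K] FreeAlgebra K X :=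
  (word K X).constr K fun w => c (wt d w) • word K X w

@[simp] lemma scal_word (d : X → ℕ) (c : ℕ → K) (w : List X) :
    scal d c (word K X w) = c (wt d w) • word K X w := by
  simp [scal]

lemma repr_scal (d : X → ℕ) (c : ℕ → K) (a : FreeAlgebra K X) (w : List X) :
    (word K X).repr (scal d c a) w = c (wt d w) * (word K X).repr a w := by
  have : (word K X).coord w ∘ₗ scal d c = c (wt d w) • (word K X).coord w := by
    classical
    refine (word K X).ext fun u => ?_
    simp only [LinearMap.comp_apply, scal_word, map_smul, LinearMap.smul_apply, Basis.coord_apply,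
      Basis.repr_self, Finsupp.single_apply]
    split_ifs with h <;> simp [h]
  exact LinearMap.congr_fun this a

lemma scal_of_mem {d : X → ℕ} {c : ℕ → K} {n : ℕ} {a : FreeAlgebra K X}
    (h : a ∈ wtPart K d {n}) : scal d c a = c n • a := by
  refine (word K X).repr.injective (Finsupp.ext fun w => ?_)
  rw [repr_scal, map_smul, Finsupp.smul_apply, smul_eq_mul]
  by_cases hw : (word K X).repr a w = 0
  · simp [hw]
  · rw [show wt d w = n from mem_wtPart.1 h w hw]

/-- The projection onto the homogeneous component of degree `n`. -/
def proj (d : X → ℕ) (n : ℕ) : FreeAlgebra K X →ₗ[K] FreeAlgebra K X :=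
  scal d fun m => if m = n then 1 else 0

lemma repr_proj (d : X → ℕ) (n : ℕ) (a : FreeAlgebra K X) (w : List X) :
    (word K X).repr (proj d n a) w = if wt d w = n then (word K X).repr a w else 0 := by
  rw [proj, repr_scal]; split_ifs <;> simp

lemma proj_mem (d : X → ℕ) (n : ℕ) (a : FreeAlgebra K X) : proj d n a ∈ wtPart K d {n} := by
  refine mem_wtPart.2 fun w hw => ?_
  rw [repr_proj] at hw
  simp only [ne_eq, ite_eq_right_iff, Classical.not_imp] at hw
  exact hw.1

lemma proj_of_mem {d : X → ℕ} {m n : ℕ} {a : FreeAlgebra K X} (h : a ∈ wtPart K d {m}) :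
    proj d n a = if m = n then a else 0 := by
  rw [proj, scal_of_mem h]; split_ifs <;> simp

lemma sub_proj_mem {d : X → ℕ} {n : ℕ} {a : FreeAlgebra K X}
    (h : a ∈ wtPart K d (Set.Iio (n + 1))) : a - proj d n a ∈ wtPart K d (Set.Iio n) := by
  refine mem_wtPart.2 fun w hw => ?_
  rw [map_sub, Finsupp.sub_apply, repr_proj] at hw
  split_ifs at hw with h1
  · simp at hw
  · have := mem_wtPart.1 h w (by simpa using hw)
    simp only [Set.mem_Iio] at *
    omega

lemma eq_sum_proj {d : X → ℕ} {n : ℕ} {a : FreeAlgebra K X}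
    (h : a ∈ wtPart K d (Set.Iio n)) : a = ∑ i ∈ Finset.range n, proj d i a := by
  refine (word K X).repr.injective (Finsupp.ext fun w => ?_)
  rw [map_sum, Finsupp.finsetSum_apply]
  simp only [repr_proj, Finset.sum_ite_eq, Finset.mem_range]
  split_ifs with h1
  · rfl
  · by_contra h2
    exact h1 (mem_wtPart.1 h w h2)

lemma exists_mem_Iio (d : X → ℕ) (a : FreeAlgebra K X) : ∃ n, a ∈ wtPart K d (Set.Iio n) := by
  refine ⟨((word K X).repr a).support.sup (wt d) + 1, mem_wtPart.2 fun w hw => ?_⟩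
  exact Nat.lt_succ_of_le (Finset.le_sup (f := wt d) (by simpa using hw))

/-! ### Stripping letters -/

lemma concat_injective (x : X) : Function.Injective fun w : List X => w ++ [x] :=
  fun _ _ h => List.append_cancel_right h

/-- Removal of a final letter `x`; words not ending in `x` are sent to zero. -/
def stripRight (x : X) : FreeAlgebra K X →ₗ[K] FreeAlgebra K X :=
  (word K X).repr.symm.toLinearMap ∘ₗ Finsupp.lcomapDomain _ (concat_injective x) ∘ₗ
    (word K X).repr.toLinearMap

lemma repr_stripRight (x : X) (a : FreeAlgebra K X) (w : List X) :
    (word K X).repr (stripRight x a) w = (word K X).repr a (w ++ [x]) := by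
  simp [stripRight, Finsupp.lcomapDomain]

open Classical in
lemma stripRight_mul_ι (x y : X) (a : FreeAlgebra K X) :
    stripRight x (a * FreeAlgebra.ι K y) = if y = x then a else 0 := by
  have key : ∀ u : List X, stripRight x (word K X u * FreeAlgebra.ι K y) =
      if y = x then word K X u else 0 := by
    intro u
    refine (word K X).repr.injective (Finsupp.ext fun w => ?_)
    rw [← word_concat, repr_stripRight, Basis.repr_self, Finsupp.single_apply]
    by_cases h : y = x
    · subst h
      simp [Finsupp.single_apply]
    · simp [h]
  have := (word K X).ext (f₁ := stripRight x ∘ₗ LinearMap.mulRight K (FreeAlgebra.ι K y))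
    (f₂ := if y = x then LinearMap.id else 0) (fun u => by
      rw [LinearMap.comp_apply, LinearMap.mulRight_apply, key]; split_ifs <;> simp)
  have := LinearMap.congr_fun this a
  rw [LinearMap.comp_apply, LinearMap.mulRight_apply] at this
  rw [this]; split_ifs <;> simp

/-- `stripRight x` is a skew derivation with respect to the augmentation. -/
lemma stripRight_mul (x : X) (p a : FreeAlgebra K X) :
    stripRight x (p * a) = p * stripRight x a + aug K X a • stripRight x p := by
  classical
  have := (word K X).ext (f₁ := stripRight x ∘ₗ LinearMap.mulLeft K p)
    (f₂ := LinearMap.mulLeft K p ∘ₗ stripRight x + (aug K X).toLinearMap.smulRight (stripRight x p))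
    (fun w => by
      induction w using List.reverseRecOn with
      | nil =>
        have h1 : stripRight x (1 : FreeAlgebra K X) = 0 := by
          refine (word K X).repr.injective (Finsupp.ext fun w => ?_)
          rw [← word_nil, repr_stripRight, Basis.repr_self]
          simp
        simp [h1]
      | append_singleton u y _ =>
        rw [word_concat]
        simp only [LinearMap.comp_apply, LinearMap.mulLeft_apply, LinearMap.add_apply,
          LinearMap.smulRight_apply, AlgHom.toLinearMap_apply, map_mul, aug_ι, mul_zero, zero_smul,
          add_zero, ← mul_assoc, stripRight_mul_ι]
        split_ifs <;> simp)
  simpa using LinearMap.congr_fun this a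

/-- The family of left cofactors: the word `x :: w` is sent to the word `w` in position `x`. -/
def stripLeft : FreeAlgebra K X →ₗ[K] (X →₀ FreeAlgebra K X) :=
  (word K X).constr K fun w => match w with
    | [] => 0
    | x :: u => Finsupp.single x (word K X u)

lemma stripLeft_one : stripLeft (1 : FreeAlgebra K X) = 0 := by
  rw [← word_nil, stripLeft, Basis.constr_basis]

lemma stripLeft_cons (x : X) (w : List X) :
    stripLeft (word K X (x :: w)) = Finsupp.single x (word K X w) := by
  rw [stripLeft, Basis.constr_basis]

lemma repr_stripLeft (x : X) (w : List X) (a : FreeAlgebra K X) :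
    (word K X).repr (stripLeft a x) w = (word K X).repr a (x :: w) := by
  classical
  have := (word K X).ext
    (f₁ := (word K X).coord w ∘ₗ Finsupp.lapply x ∘ₗ stripLeft)
    (f₂ := (word K X).coord (x :: w)) (fun u => by
      cases u with
      | nil => rw [Basis.coord_apply, Basis.repr_self]; simp [stripLeft_one]
      | cons y u =>
        simp only [LinearMap.comp_apply, stripLeft_cons, Finsupp.lapply_apply, Basis.coord_apply,
          Basis.repr_self, Finsupp.single_apply]
        by_cases h : y = x
        · simp [h, Finsupp.single_apply]
        · simp [h])
  exact LinearMap.congr_fun this a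

lemma eq_aug_add_stripLeft (a : FreeAlgebra K X) :
    a = algebraMap K _ (aug K X a) +
      (stripLeft a).sum fun x b => FreeAlgebra.ι K x * b := by
  have := (word K X).ext
    (f₁ := LinearMap.id)
    (f₂ := Algebra.linearMap K _ ∘ₗ (aug K X).toLinearMap +
      Finsupp.lsum K (fun x => LinearMap.mulLeft K (FreeAlgebra.ι K x)) ∘ₗ stripLeft) (fun u => by
      cases u with
      | nil => simp [stripLeft_one]
      | cons y u =>
        rw [LinearMap.add_apply, LinearMap.comp_apply, LinearMap.comp_apply, stripLeft_cons]
        simp)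
  exact LinearMap.congr_fun this a

/-! ### The Dynkin operator -/

variable (K X) in
/-- The canonical map from the free Lie algebra to the free associative algebra. -/
def inc : FreeLieAlgebra K X →ₗ⁅K⁆ FreeAlgebra K X := FreeLieAlgebra.lift K (FreeAlgebra.ι K)

@[simp] lemma inc_of (x : X) : inc K X (FreeLieAlgebra.of K x) = FreeAlgebra.ι K x := by
  simp [inc]

lemma inc_lie (f g : FreeLieAlgebra K X) :
    inc K X ⁅f, g⁆ = inc K X f * inc K X g - inc K X g * inc K X f := by
  rw [LieHom.map_lie, LieRing.of_associative_ring_bracket]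

/-- Induction principle: a Lie subalgebra containing the generators is everything. -/
lemma lie_mem (N : LieSubalgebra K (FreeLieAlgebra K X))
    (h : ∀ x, FreeLieAlgebra.of K x ∈ N) (f : FreeLieAlgebra K X) : f ∈ N := by
  have : N.incl.comp (FreeLieAlgebra.lift K fun x => (⟨_, h x⟩ : N)) = LieHom.id := by
    ext x; simp
  have h2 := LieHom.congr_fun this f
  simp only [LieHom.comp_apply, LieHom.id_apply] at h2
  rw [← h2]
  exact Subtype.property _

/-- The right-normed bracket `⁅x₁, ⁅x₂, …, xₙ⁆⁆` of the letters of a word. -/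
def rightNormed : List X → FreeLieAlgebra K X
  | [] => 0
  | [x] => FreeLieAlgebra.of K x
  | x :: y :: w => ⁅FreeLieAlgebra.of K x, rightNormed (y :: w)⁆

variable (K X) in
/-- The Dynkin operator: the linear map sending a word to its right-normed bracketing. -/
def dynkin : FreeAlgebra K X →ₗ[K] FreeLieAlgebra K X :=
  (word K X).constr K rightNormed

@[simp] lemma dynkin_one : dynkin K X 1 = 0 := by
  rw [← word_nil, dynkin, Basis.constr_basis, rightNormed]

lemma dynkin_ι_mul (x : X) (a : FreeAlgebra K X) :
    dynkin K X (FreeAlgebra.ι K x * a) =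
      ⁅FreeLieAlgebra.of K x, dynkin K X a⁆ + aug K X a • FreeLieAlgebra.of K x := by
  have := (word K X).ext
    (f₁ := dynkin K X ∘ₗ LinearMap.mulLeft K (FreeAlgebra.ι K x))
    (f₂ := (LieAlgebra.ad K _ (FreeLieAlgebra.of K x)) ∘ₗ dynkin K X +
      (aug K X).toLinearMap.smulRight (FreeLieAlgebra.of K x)) (fun w => by
      simp only [LinearMap.comp_apply, LinearMap.mulLeft_apply, ← word_cons, LinearMap.add_apply,
        LieAlgebra.ad_apply, LinearMap.smulRight_apply, AlgHom.toLinearMap_apply]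
      cases w with
      | nil =>
        rw [dynkin, Basis.constr_basis, Basis.constr_basis, rightNormed, rightNormed]
        simp
      | cons y w =>
        rw [dynkin, Basis.constr_basis, Basis.constr_basis, rightNormed]
        simp)
  simpa using LinearMap.congr_fun this a

@[simp] lemma dynkin_ι (x : X) : dynkin K X (FreeAlgebra.ι K x) = FreeLieAlgebra.of K x := by
  simpa using dynkin_ι_mul (K := K) x 1

variable (K X) in
/-- The adjoint action of the free associative algebra on the free Lie algebra. -/
def adAct : FreeAlgebra K X →ₐ[K] Module.End K (FreeLieAlgebra K X) :=
  FreeAlgebra.lift K fun x => LieAlgebra.ad K _ (FreeLieAlgebra.of K x)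

lemma adAct_inc (f g : FreeLieAlgebra K X) : adAct K X (inc K X f) g = ⁅f, g⁆ := by
  have : ((adAct K X : FreeAlgebra K X →ₗ⁅K⁆ Module.End K (FreeLieAlgebra K X)).comp (inc K X)) =
      LieAlgebra.ad K _ := by
    ext x : 1
    simp [adAct]
  have := LinearMap.congr_fun (LieHom.congr_fun this f) g
  simpa using this

lemma dynkin_mul (a c : FreeAlgebra K X) :
    dynkin K X (a * c) = adAct K X a (dynkin K X c) + aug K X c • dynkin K X a := by
  have := (word K X).ext
    (f₁ := dynkin K X ∘ₗ LinearMap.mulRight K c)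
    (f₂ := (LinearMap.applyₗ (dynkin K X c)) ∘ₗ (adAct K X).toLinearMap +
      aug K X c • dynkin K X) (fun w => by
      induction w with
      | nil => simp
      | cons x w ih =>
        simp only [LinearMap.comp_apply, LinearMap.mulRight_apply, LinearMap.add_apply,
          LinearMap.applyₗ_apply_apply, AlgHom.toLinearMap_apply, LinearMap.smul_apply] at ih ⊢
        rw [word_cons, mul_assoc, dynkin_ι_mul, ih, dynkin_ι_mul]
        simp only [map_mul, lie_add, lie_smul, smul_add, smul_smul, Module.End.mul_apply]
        rw [show adAct K X (FreeAlgebra.ι K x) = LieAlgebra.ad K _ (FreeLieAlgebra.of K x) by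
          simp [adAct], LieAlgebra.ad_apply, mul_comm (aug K X c)]
        abel)
  simpa using LinearMap.congr_fun this a

@[simp] lemma aug_inc (f : FreeLieAlgebra K X) : aug K X (inc K X f) = 0 := by
  let N : LieSubalgebra K (FreeLieAlgebra K X) :=
    { LinearMap.ker ((aug K X).toLinearMap ∘ₗ
        (inc K X : FreeLieAlgebra K X →ₗ[K] FreeAlgebra K X)) with
      lie_mem' := by
        intro f g _ _
        change aug K X (inc K X ⁅f, g⁆) = 0
        rw [inc_lie]; simp [mul_comm] }
  exact lie_mem N (fun x => by change aug K X (inc K X _) = 0; simp) f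

/-- The composite `dynkin ∘ inc` is a derivation of the free Lie algebra. -/
lemma dynkin_inc_lie (f g : FreeLieAlgebra K X) :
    dynkin K X (inc K X ⁅f, g⁆) = ⁅f, dynkin K X (inc K X g)⁆ + ⁅dynkin K X (inc K X f), g⁆ := by
  rw [inc_lie, map_sub, dynkin_mul, dynkin_mul, adAct_inc, adAct_inc, aug_inc, aug_inc, zero_smul,
    zero_smul, add_zero, add_zero, ← lie_skew g, sub_eq_add_neg]
  simp

lemma dynkin_surjective (f : FreeLieAlgebra K X) : ∃ a, dynkin K X a = f := by
  let N : LieSubalgebra K (FreeLieAlgebra K X) :=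
    { LinearMap.range (dynkin K X) with
      lie_mem' := by
        rintro f _ _ ⟨c, rfl⟩
        -- subtracting its constant term from `c` does not change its image
        refine ⟨inc K X f * (c - algebraMap K _ (aug K X c)), ?_⟩
        rw [dynkin_mul, adAct_inc]
        simp [Algebra.algebraMap_eq_smul_one] }
  exact lie_mem N (fun x => ⟨FreeAlgebra.ι K x, dynkin_ι x⟩) f

/-- The degree in which every letter has weight one. -/
abbrev one1 : X → ℕ := fun _ => 1

lemma dynkin_inc_dynkin (w : List X) :
    dynkin K X (inc K X (dynkin K X (word K X w))) = (wt one1 w : K) • dynkin K X (word K X w) := by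
  induction w with
  | nil => simp
  | cons x w ih =>
    rw [word_cons, dynkin_ι_mul, map_add, map_add, dynkin_inc_lie, ih]
    rcases w with _ | ⟨y, w⟩
    · simp
    · simp [add_smul, add_comm]

lemma inc_dynkin_mem (w : List X) :
    inc K X (dynkin K X (word K X w)) ∈ wtPart K one1 {wt one1 w} := by
  induction w with
  | nil => simp
  | cons x w ih =>
    have hx : FreeAlgebra.ι K x ∈ wtPart K one1 {1} := by
      rw [← word_singleton]; exact word_mem_wtPart (by simp)
    rw [word_cons, dynkin_ι_mul, map_add, inc_lie, inc_of]
    refine add_mem (sub_mem (mul_mem_wtPart ?_ hx ih) (mul_mem_wtPart ?_ ih hx)) ?_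
    · simp
    · simp [add_comm]
    · rcases w with _ | ⟨y, w⟩
      · simpa using hx
      · simp

/-- `inc ∘ dynkin` is homogeneous of degree zero, hence commutes with diagonal operators. -/
lemma inc_dynkin_scal (c : ℕ → K) (a : FreeAlgebra K X) :
    inc K X (dynkin K X (scal one1 c a)) = scal one1 c (inc K X (dynkin K X a)) := by
  have := (word K X).ext
    (f₁ := (inc K X : FreeLieAlgebra K X →ₗ[K] FreeAlgebra K X) ∘ₗ dynkin K X ∘ₗ scal one1 c)
    (f₂ := scal one1 c ∘ₗ (inc K X : FreeLieAlgebra K X →ₗ[K] FreeAlgebra K X) ∘ₗ dynkin K X)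
    (fun w => by
      simp [scal_of_mem (inc_dynkin_mem w)])
  exact LinearMap.congr_fun this a

lemma proj_inc_mem (n : ℕ) (f : FreeLieAlgebra K X) :
    ∃ g, inc K X g = proj one1 n (inc K X f) := by
  obtain ⟨a, rfl⟩ := dynkin_surjective f
  exact ⟨_, inc_dynkin_scal _ a⟩

/-- In characteristic zero the free Lie algebra embeds into the free associative algebra: on
elements of degree `n`, the map `n⁻¹ • dynkin` is a left inverse of `inc`. -/
lemma inc_injective [CharZero K] : Function.Injective (inc K X) := by
  have key : ∀ a, dynkin K X (scal one1 (fun n => (n : K)⁻¹) (inc K X (dynkin K X a))) =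
      dynkin K X a := by
    intro a
    have := (word K X).ext
      (f₁ := dynkin K X ∘ₗ scal one1 (fun n => (n : K)⁻¹) ∘ₗ
        (inc K X : FreeLieAlgebra K X →ₗ[K] FreeAlgebra K X) ∘ₗ dynkin K X)
      (f₂ := dynkin K X) (fun w => by
        simp only [LinearMap.comp_apply, LieHom.coe_toLinearMap]
        rw [scal_of_mem (inc_dynkin_mem w), map_smul, dynkin_inc_dynkin, smul_smul]
        rcases w with _ | ⟨y, w⟩
        · simp
        · rw [inv_mul_cancel₀, one_smul]
          exact Nat.cast_ne_zero.2 (by simp))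
    exact LinearMap.congr_fun this a
  refine (injective_iff_map_eq_zero (inc K X)).2 fun f hf => ?_
  obtain ⟨a, rfl⟩ := dynkin_surjective f
  rw [← key a, hf]; simp

/-! ### The coproduct and primitive elements -/

variable (K X) in
/-- The coproduct of the free associative algebra for which the letters are primitive. -/
def comul : FreeAlgebra K X →ₐ[K] FreeAlgebra K X ⊗[K] FreeAlgebra K X :=
  FreeAlgebra.lift K fun x => FreeAlgebra.ι K x ⊗ₜ 1 + 1 ⊗ₜ FreeAlgebra.ι K x

@[simp] lemma comul_ι (x : X) :
    comul K X (FreeAlgebra.ι K x) = FreeAlgebra.ι K x ⊗ₜ 1 + 1 ⊗ₜ FreeAlgebra.ι K x := by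
  simp [comul]

/-- Primitive elements of the free associative algebra. -/
def IsPrim (a : FreeAlgebra K X) : Prop := comul K X a = a ⊗ₜ 1 + 1 ⊗ₜ a

lemma isPrim_inc (f : FreeLieAlgebra K X) : IsPrim (inc K X f) := by
  let N : LieSubalgebra K (FreeLieAlgebra K X) :=
    { LinearMap.eqLocus ((comul K X).toLinearMap ∘ₗ
          (inc K X : FreeLieAlgebra K X →ₗ[K] FreeAlgebra K X))
        (((TensorProduct.mk K _ _).flip 1 + TensorProduct.mk K _ _ 1) ∘ₗ
          (inc K X : FreeLieAlgebra K X →ₗ[K] FreeAlgebra K X)) with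
      lie_mem' := by
        intro f g hf hg
        change comul K X (inc K X f) = inc K X f ⊗ₜ 1 + 1 ⊗ₜ inc K X f at hf
        change comul K X (inc K X g) = inc K X g ⊗ₜ 1 + 1 ⊗ₜ inc K X g at hg
        change comul K X (inc K X ⁅f, g⁆) = inc K X ⁅f, g⁆ ⊗ₜ 1 + 1 ⊗ₜ inc K X ⁅f, g⁆
        rw [inc_lie]
        simp only [map_sub, map_mul, hf, hg, TensorProduct.sub_tmul, TensorProduct.tmul_sub,
          mul_add, add_mul, Algebra.TensorProduct.tmul_mul_tmul, one_mul, mul_one]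
        abel }
  exact lie_mem N (fun x => by
    change comul K X (inc K X _) = (inc K X _) ⊗ₜ 1 + 1 ⊗ₜ (inc K X _); simp) f

/-- The counit law. -/
lemma aug_comul (a : FreeAlgebra K X) :
    Algebra.TensorProduct.lid K _
      (Algebra.TensorProduct.map (aug K X) (AlgHom.id K _) (comul K X a)) = a := by
  have : ((Algebra.TensorProduct.lid K (FreeAlgebra K X)).toAlgHom.comp
      (Algebra.TensorProduct.map (aug K X) (AlgHom.id K _))).comp (comul K X) = AlgHom.id K _ := by
    ext x; simp
  exact AlgHom.congr_fun this a

lemma IsPrim.aug_eq_zero {p : FreeAlgebra K X} (hp : IsPrim p) : aug K X p = 0 := by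
  have h := aug_comul p
  rw [hp] at h
  simp only [map_add, Algebra.TensorProduct.map_tmul, AlgHom.coe_id, id_eq, map_one,
    Algebra.TensorProduct.lid_tmul, one_smul, add_eq_right] at h
  simpa using congrArg (aug K X) h

/-- The convolution of `inc ∘ dynkin` with the identity is the Euler operator. -/
lemma dynkin_convolution (a : FreeAlgebra K X) :
    LinearMap.mul' K _ (TensorProduct.map
      ((inc K X : FreeLieAlgebra K X →ₗ[K] FreeAlgebra K X) ∘ₗ dynkin K X)
      LinearMap.id (comul K X a)) = scal one1 (fun n => (n : K)) a := by
  set Φ := LinearMap.mul' K _ ∘ₗ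
    (TensorProduct.map ((inc K X : FreeLieAlgebra K X →ₗ[K] FreeAlgebra K X) ∘ₗ dynkin K X)
      LinearMap.id) with hΦ
  have hcounit : ∀ z : FreeAlgebra K X ⊗[K] FreeAlgebra K X, ∀ x : X,
      Φ ((FreeAlgebra.ι K x ⊗ₜ 1 + 1 ⊗ₜ FreeAlgebra.ι K x) * z) = FreeAlgebra.ι K x * Φ z +
        FreeAlgebra.ι K x * Algebra.TensorProduct.lid K _
          (Algebra.TensorProduct.map (aug K X) (AlgHom.id K _) z) := by
    intro z x
    induction z with
    | zero => simp
    | add y z hy hz => rw [mul_add, map_add, hy, hz]; simp only [map_add, mul_add]; abel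
    | tmul b c =>
      simp only [hΦ, add_mul, Algebra.TensorProduct.tmul_mul_tmul, one_mul, map_add,
        LinearMap.comp_apply, TensorProduct.map_tmul, LinearMap.mul'_apply, LinearMap.id_apply,
        LieHom.coe_toLinearMap, dynkin_ι_mul, inc_lie, inc_of, map_smul,
        Algebra.TensorProduct.map_tmul, Algebra.TensorProduct.lid_tmul, AlgHom.coe_id, id_eq,
        add_mul, sub_mul, mul_assoc, smul_mul_assoc, mul_smul_comm]
      abel
  have := (word K X).ext (f₁ := Φ ∘ₗ (comul K X).toLinearMap)
    (f₂ := scal one1 (fun n => (n : K))) (fun w => by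
      induction w with
      | nil =>
        rw [scal_word]
        simp [hΦ, Algebra.TensorProduct.one_def]
      | cons x w ih =>
        simp only [LinearMap.comp_apply, AlgHom.toLinearMap_apply] at ih ⊢
        rw [scal_word] at ih ⊢
        rw [word_cons, map_mul, comul_ι, hcounit, ih, aug_comul]
        simp [add_smul, add_comm])
  exact LinearMap.congr_fun this a

/-- Friedrichs' criterion, in characteristic zero: primitive elements are Lie elements. -/
lemma exists_inc_of_isPrim [CharZero K] {p : FreeAlgebra K X} (hp : IsPrim p) :
    ∃ f, inc K X f = p := by
  have h1 : inc K X (dynkin K X p) = scal one1 (fun n => (n : K)) p := by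
    rw [← dynkin_convolution, hp]; simp
  refine ⟨dynkin K X (scal one1 (fun n => (n : K)⁻¹) p), ?_⟩
  rw [inc_dynkin_scal, h1]
  refine (word K X).repr.injective (Finsupp.ext fun w => ?_)
  rw [repr_scal, repr_scal]
  rcases w with _ | ⟨y, w⟩
  · simp [← aug_eq_repr, hp.aug_eq_zero]
  · rw [inv_mul_cancel_left₀]
    exact Nat.cast_ne_zero.2 (by simp)

/-! ### Homogeneous primitive elements and the right ideal they generate -/

variable {Y : Type*} {M : ℕ → Submodule K (FreeAlgebra K X)} {d : Y → ℕ} {b : Y → FreeAlgebra K X}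

/-- The decomposable part, in degree `n`, of the right ideal generated by the homogeneous spaces
`M k`: the span of the products `m * w` of degree `n` with `m ∈ M k` and `w` a nonempty word. -/
def decomp (M : ℕ → Submodule K (FreeAlgebra K X)) (n : ℕ) : Submodule K (FreeAlgebra K X) :=
  Submodule.span K {z | ∃ k, ∃ m ∈ M k, ∃ w : List X, w ≠ [] ∧ k + wt one1 w = n ∧
    z = m * word K X w}

/-- The right ideal generated by all `M k`. -/
def rightIdeal (M : ℕ → Submodule K (FreeAlgebra K X)) : Submodule K (FreeAlgebra K X) :=
  Submodule.span K {z | ∃ k, ∃ m ∈ M k, ∃ a, z = m * a}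

/-- The family `b j ∈ M (d j)` is a homogeneous minimal generating family of the right ideal
generated by the spaces `M n`, which consist of homogeneous primitive elements of degree `n`:
in each degree it generates `M n` modulo the decomposable part, and does so without redundancy. -/
structure IsMinGen (M : ℕ → Submodule K (FreeAlgebra K X)) (d : Y → ℕ)
    (b : Y → FreeAlgebra K X) : Prop where
  homog : ∀ n, M n ≤ wtPart K one1 {n}
  prim : ∀ n, ∀ m ∈ M n, IsPrim m
  mem : ∀ j, b j ∈ M (d j)
  gen : ∀ n, M n ≤ Submodule.span K (b '' {j | d j = n}) ⊔ decomp M n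
  indep : ∀ n, ∀ c : Y →₀ K, (∀ j, c j ≠ 0 → d j = n) →
    (c.sum fun j r => r • b j) ∈ decomp M n → c = 0

lemma mul_mem_rightIdeal {k : ℕ} {m : FreeAlgebra K X} (hm : m ∈ M k) (a : FreeAlgebra K X) :
    m * a ∈ rightIdeal M :=
  Submodule.subset_span ⟨k, m, hm, a, rfl⟩

lemma proj_mul_word {k : ℕ} {m : FreeAlgebra K X} (hm : m ∈ wtPart K one1 {k}) (n : ℕ)
    (w : List X) : proj one1 n (m * word K X w) =
      if k + wt one1 w = n then m * word K X w else 0 := by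
  refine proj_of_mem (mul_mem_wtPart (t := {wt one1 w}) ?_ hm (word_mem_wtPart rfl))
  simp

/-- Modulo decomposables, the degree `n` part of `m * a` only depends on the constant term
of `a`. -/
lemma IsMinGen.proj_mul_sub_mem (h : IsMinGen M d b) {k : ℕ} {m : FreeAlgebra K X}
    (hm : m ∈ M k) (n : ℕ) (a : FreeAlgebra K X) :
    proj one1 n (m * a) - (if k = n then aug K X a else 0) • m ∈ decomp M n := by
  have key := word_mem (p := (decomp M n).comap (proj one1 n ∘ₗ LinearMap.mulLeft K m -
    (if k = n then (aug K X).toLinearMap else 0).smulRight m)) (fun w => ?_) a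
  · rw [Submodule.mem_comap] at key
    convert key using 1
    split_ifs <;> simp
  · rw [Submodule.mem_comap, LinearMap.sub_apply, LinearMap.comp_apply, LinearMap.mulLeft_apply,
      proj_mul_word (h.homog k hm)]
    rcases w with _ | ⟨x, w⟩
    · split_ifs <;> simp_all
    · have : (if k = n then (aug K X).toLinearMap else 0) (word K X (x :: w)) = 0 := by
        split_ifs <;> simp
      rw [LinearMap.smulRight_apply, this, zero_smul, sub_zero]
      split_ifs with h1
      · exact Submodule.subset_span ⟨k, m, hm, x :: w, by simp, h1, rfl⟩
      · exact zero_mem _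

lemma IsMinGen.aug_eq_zero_of_sum (h : IsMinGen M d b) {a : Y →₀ FreeAlgebra K X}
    (ha : (a.sum fun j c => b j * c) = 0) (j : Y) : aug K X (a j) = 0 := by
  classical
  set c : Y →₀ K := (a.mapRange (aug K X) (map_zero _)).filter fun i => d i = d j with hc
  have hci : ∀ i, c i = if d i = d j then aug K X (a i) else 0 := by
    intro i; simp [hc, Finsupp.filter_apply]
  have hc0 : c = 0 := by
    refine h.indep (d j) c (fun i hi => ?_) ?_
    · rw [hci] at hi; by_contra h1; simp [h1] at hi
    · have h1 : (c.sum fun j r => r • b j) = ∑ i ∈ a.support, c i • b i := by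
        refine Finsupp.sum_of_support_subset _ (fun i hi => ?_) _ (by simp)
        rw [Finsupp.mem_support_iff, hci] at hi
        rw [Finsupp.mem_support_iff]
        rintro h2; simp [h2] at hi
      have h2 : ∑ i ∈ a.support, proj one1 (d j) (b i * a i) = 0 := by
        rw [← map_sum]; exact (congrArg _ ha).trans (map_zero _)
      rw [h1, ← neg_mem_iff, ← zero_sub, ← h2, ← Finset.sum_sub_distrib]
      refine Submodule.sum_mem _ fun i _ => ?_
      rw [hci]
      exact h.proj_mul_sub_mem (h.mem i) _ _
  simpa [hci] using DFunLike.congr_fun hc0 j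

/-- The right ideal is free on the family `b`: there are no relations `∑ b j * a j = 0`. -/
lemma IsMinGen.eq_zero_of_sum (h : IsMinGen M d b) {a : Y →₀ FreeAlgebra K X}
    (ha : (a.sum fun j c => b j * c) = 0) : a = 0 := by
  have key : ∀ w : List X, ∀ a : Y →₀ FreeAlgebra K X, (a.sum fun j c => b j * c) = 0 →
      ∀ j, (word K X).repr (a j) w = 0 := by
    intro w
    induction w using List.reverseRecOn with
    | nil => intro a ha j; rw [← aug_eq_repr]; exact h.aug_eq_zero_of_sum ha j
    | append_singleton w x ih =>
      intro a ha j
      -- stripping the last letter turns the relation into another one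
      have := ih (a.mapRange (stripRight x) (map_zero _)) (by
        rw [Finsupp.sum_mapRange_index (by simp), ← map_zero (stripRight x), ← ha, Finsupp.sum,
          Finsupp.sum, map_sum]
        refine Finset.sum_congr rfl fun i _ => ?_
        rw [stripRight_mul, h.aug_eq_zero_of_sum ha i, zero_smul, add_zero]) j
      rwa [Finsupp.mapRange_apply, repr_stripRight] at this
  ext1 j
  refine (word K X).repr.injective (Finsupp.ext fun w => ?_)
  rw [key w a ha j]; simp

/-- The span of the products `b j * c` of degree less than `N`, degree being understood
termwise. -/
def bddGen (d : Y → ℕ) (b : Y → FreeAlgebra K X) (N : ℕ) : Submodule K (FreeAlgebra K X) :=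
  Submodule.span K {z | ∃ j, ∃ c ∈ wtPart K one1 {i | d j + i < N}, z = b j * c}

lemma bddGen_mono {N N' : ℕ} (hN : N ≤ N') : bddGen d b N ≤ bddGen d b N' := by
  refine Submodule.span_mono ?_
  rintro _ ⟨j, c, hc, rfl⟩
  exact ⟨j, c, wtPart_mono (fun i hi => lt_of_lt_of_le hi hN) hc, rfl⟩

lemma bddGen_mul_word {N : ℕ} {z : FreeAlgebra K X} (hz : z ∈ bddGen d b N) (w : List X) :
    z * word K X w ∈ bddGen d b (N + wt one1 w) := by
  suffices bddGen d b N ≤ (bddGen d b (N + wt one1 w)).comap (LinearMap.mulRight K (word K X w)) by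
    exact this hz
  refine Submodule.span_le.2 ?_
  rintro _ ⟨j, c, hc, rfl⟩
  refine Submodule.subset_span ⟨j, c * word K X w, ?_, by simp [mul_assoc]⟩
  refine mul_mem_wtPart (t := {wt one1 w}) ?_ hc (word_mem_wtPart rfl)
  simp only [Set.mem_ofPred_eq, Set.mem_singleton_iff]
  omega

lemma exists_sum_of_mem_bddGen {N : ℕ} {z : FreeAlgebra K X} (hz : z ∈ bddGen d b N) :
    ∃ a : Y →₀ FreeAlgebra K X, (∀ j, a j ∈ wtPart K one1 {i | d j + i < N}) ∧
      z = a.sum fun j c => b j * c := by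
  classical
  induction hz using Submodule.span_induction with
  | mem z hz =>
    obtain ⟨j, c, hc, rfl⟩ := hz
    refine ⟨Finsupp.single j c, fun i => ?_, by simp⟩
    rw [Finsupp.single_apply]
    split_ifs with hi
    · exact hi ▸ hc
    · exact zero_mem _
  | zero => exact ⟨0, fun j => zero_mem _, by simp⟩
  | add y z _ _ hy hz =>
    obtain ⟨a, ha, rfl⟩ := hy
    obtain ⟨a', ha', rfl⟩ := hz
    exact ⟨a + a', fun j => add_mem (ha j) (ha' j),
      (Finsupp.sum_add_index' (by simp) (by simp [mul_add])).symm⟩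
  | smul r z _ hz =>
    obtain ⟨a, ha, rfl⟩ := hz
    refine ⟨r • a, fun j => Submodule.smul_mem _ _ (ha j), ?_⟩
    rw [Finsupp.sum_smul_index' (by simp), Finsupp.smul_sum]
    simp

lemma IsMinGen.le_bddGen (h : IsMinGen M d b) (n : ℕ) : M n ≤ bddGen d b (n + 1) := by
  induction n using Nat.strong_induction_on with
  | _ n ih =>
    refine (h.gen n).trans (sup_le (Submodule.span_le.2 ?_) (Submodule.span_le.2 ?_))
    · rintro _ ⟨j, hj, rfl⟩
      refine Submodule.subset_span ⟨j, 1, ?_, by simp⟩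
      rw [← word_nil]
      refine word_mem_wtPart ?_
      simp only [Set.mem_ofPred_eq] at hj ⊢
      simp [hj]
    · rintro _ ⟨k, m, hm, w, hw, hn, rfl⟩
      have hk : k < n := by
        rcases w with _ | ⟨x, w⟩
        · exact absurd rfl hw
        · rw [wt_cons] at hn; simp only [one1] at hn; omega
      have := bddGen_mul_word (ih k hk hm) w
      rwa [show k + 1 + wt one1 w = n + 1 by omega] at this

lemma IsMinGen.mem_bddGen (h : IsMinGen M d b) {N : ℕ} {r : FreeAlgebra K X}
    (hr : r ∈ rightIdeal M) (hN : r ∈ wtPart K one1 (Set.Iio N)) : r ∈ bddGen d b N := by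
  have key : ∀ n, proj one1 n r ∈ bddGen d b (n + 1) := by
    intro n
    suffices rightIdeal M ≤ (bddGen d b (n + 1)).comap (proj one1 n) from this hr
    refine Submodule.span_le.2 ?_
    rintro _ ⟨k, m, hm, a, rfl⟩
    suffices ha : a ∈ (bddGen d b (n + 1)).comap (proj one1 n ∘ₗ LinearMap.mulLeft K m) from
      Submodule.mem_comap.1 ha
    refine word_mem (fun w => ?_) a
    rw [Submodule.mem_comap, LinearMap.comp_apply, LinearMap.mulLeft_apply,
      proj_mul_word (h.homog k hm)]
    split_ifs with h1
    · have := bddGen_mul_word (h.le_bddGen k hm) w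
      rwa [show k + 1 + wt one1 w = n + 1 by omega] at this
    · exact zero_mem _
  rw [eq_sum_proj hN]
  refine Submodule.sum_mem _ fun i hi => bddGen_mono ?_ (key i)
  exact Finset.mem_range.1 hi

lemma IsMinGen.pos (h : IsMinGen M d b) (j : Y) : 0 < d j := by
  by_contra hj
  have hm := h.mem j
  have hb : b j = 0 := by
    refine (word K X).repr.injective (Finsupp.ext fun w => ?_)
    rw [map_zero, Finsupp.zero_apply]
    rcases w with _ | ⟨x, w⟩
    · rw [← aug_eq_repr, (h.prim _ _ hm).aug_eq_zero]
    · by_contra hw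
      have := mem_wtPart.1 (h.homog _ hm) _ hw
      rw [wt_cons, Set.mem_singleton_iff] at this
      simp only [one1] at this
      omega
  classical
  have := h.indep (d j) (Finsupp.single j 1)
    (fun i hi => by rw [Finsupp.single_apply] at hi; simp at hi; rw [hi]) (by simp [hb])
  simp at this

/-! ### The subalgebra generated by the minimal generators as coinvariants -/

/-- Contraction of the second tensor factor with a linear functional. -/
def contract (f : FreeAlgebra K X →ₗ[K] K) :
    FreeAlgebra K X ⊗[K] FreeAlgebra K X →ₗ[K] FreeAlgebra K X :=
  (TensorProduct.rid K _).toLinearMap ∘ₗ LinearMap.lTensor _ f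

@[simp] lemma contract_tmul (f : FreeAlgebra K X →ₗ[K] K) (u w : FreeAlgebra K X) :
    contract f (u ⊗ₜ w) = f w • u := by
  simp [contract]

lemma aug_contract_comul (f : FreeAlgebra K X →ₗ[K] K) (a : FreeAlgebra K X) :
    aug K X (contract f (comul K X a)) = f a := by
  have : ∀ z, aug K X (contract f z) = f (Algebra.TensorProduct.lid K _
      (Algebra.TensorProduct.map (aug K X) (AlgHom.id K _) z)) := by
    intro z
    induction z with
    | zero => simp
    | add y z hy hz => simp only [map_add, hy, hz]
    | tmul u w => simp [mul_comm]
  rw [this, aug_comul]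

/-- An element is coinvariant if its coproduct is `a ⊗ 1` modulo `T ⊗ rightIdeal M`, a condition
expressed through the linear functionals vanishing on the right ideal. -/
def IsCoinv (M : ℕ → Submodule K (FreeAlgebra K X)) (a : FreeAlgebra K X) : Prop :=
  ∀ f : FreeAlgebra K X →ₗ[K] K, rightIdeal M ≤ LinearMap.ker f →
    contract f (comul K X a) = f 1 • a

lemma contract_comul_mul {f : FreeAlgebra K X →ₗ[K] K} (hf : rightIdeal M ≤ LinearMap.ker f)
    {k : ℕ} {m : FreeAlgebra K X} (hm : m ∈ M k) (hp : IsPrim m) (a : FreeAlgebra K X) :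
    contract f (comul K X (m * a)) = m * contract f (comul K X a) := by
  rw [map_mul, hp]
  generalize comul K X a = z
  induction z with
  | zero => simp
  | add y z hy hz => simp only [map_add, mul_add, hy, hz]
  | tmul u w =>
    have : f (m * w) = 0 := hf (mul_mem_rightIdeal hm w)
    simp [add_mul, this]

variable (K) in
/-- The algebra map from the free algebra on `Y` sending the letter `j` to `b j`. -/
abbrev subst (b : Y → FreeAlgebra K X) : FreeAlgebra K Y →ₐ[K] FreeAlgebra K X :=
  FreeAlgebra.lift K b

/-- Coinvariant elements lie in the subalgebra generated by the family `b`. -/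
lemma IsMinGen.mem_range_of_isCoinv (h : IsMinGen M d b) (N : ℕ) :
    ∀ a ∈ wtPart K one1 (Set.Iio N), IsCoinv M a → a ∈ (subst K b).range := by
  induction N with
  | zero =>
    intro a ha _
    rw [wtPart_empty (by ext; simp) ha]
    exact zero_mem _
  | succ N ih =>
    intro a ha hco
    set r := a - algebraMap K _ (aug K X a) with hr
    -- the counit law shows that functionals vanishing on the right ideal vanish at `r`
    have hrR : r ∈ rightIdeal M := by
      by_contra hn
      obtain ⟨f, hfr, hf⟩ := Submodule.exists_le_ker_of_notMem hn
      apply hfr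
      have h1 := congrArg (aug K X) (hco f hf)
      rw [aug_contract_comul, map_smul] at h1
      rw [hr, map_sub, Algebra.algebraMap_eq_smul_one, map_smul, h1]
      simp [mul_comm]
    have hrN : r ∈ wtPart K one1 (Set.Iio (N + 1)) := by
      refine sub_mem ha ?_
      rw [Algebra.algebraMap_eq_smul_one, ← word_nil]
      exact Submodule.smul_mem _ _ (word_mem_wtPart (by simp))
    obtain ⟨c, hc, hrc⟩ := exists_sum_of_mem_bddGen (h.mem_bddGen hrR hrN)
    have hcco : ∀ j, IsCoinv M (c j) := by
      intro j f hf
      have h1 : contract f (comul K X r) = f 1 • r := by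
        rw [hr, map_sub, map_sub, hco f hf, Algebra.algebraMap_eq_smul_one, map_smul, map_smul,
          map_one (comul K X), Algebra.TensorProduct.one_def, contract_tmul, smul_sub, smul_comm]
      have h2 := h.eq_zero_of_sum (a := c.mapRange
        (fun a => contract f (comul K X a) - f 1 • a) (by simp)) (by
          rw [Finsupp.sum_mapRange_index (by simp)]
          rw [← sub_eq_zero, hrc] at h1
          rw [← h1, Finsupp.sum, Finsupp.sum, map_sum, map_sum, Finset.smul_sum,
            ← Finset.sum_sub_distrib]
          refine Finset.sum_congr rfl fun i _ => ?_
          rw [contract_comul_mul hf (h.mem i) (h.prim _ _ (h.mem i))]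
          rw [mul_sub, mul_smul_comm])
      have h3 := DFunLike.congr_fun h2 j
      simpa [sub_eq_zero] using h3
    have ha' : a = algebraMap K _ (aug K X a) + r := by rw [hr]; abel
    rw [ha', hrc]
    refine add_mem (algebraMap_mem _ _) (sum_mem fun j _ => mul_mem ⟨FreeAlgebra.ι K j, ?_⟩ ?_)
    · simp
    · refine ih _ (wtPart_mono (fun i hi => ?_) (hc j)) (hcco j)
      have := h.pos j
      simp only [Set.mem_ofPred_eq, Set.mem_Iio] at *
      omega

lemma IsMinGen.mem_range (h : IsMinGen M d b) {n : ℕ} {m : FreeAlgebra K X} (hm : m ∈ M n) :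
    m ∈ (subst K b).range := by
  obtain ⟨N, hN⟩ := exists_mem_Iio one1 m
  refine h.mem_range_of_isCoinv N m hN fun f hf => ?_
  have h1 : f m = 0 := by simpa using hf (mul_mem_rightIdeal hm 1)
  rw [h.prim n m hm]
  simp [h1]

lemma IsMinGen.aug_subst (h : IsMinGen M d b) (s : FreeAlgebra K Y) :
    aug K X (subst K b s) = aug K Y s := by
  have : (aug K X).comp (subst K b) = aug K Y := by
    ext j
    simp [(h.prim _ _ (h.mem j)).aug_eq_zero]
  exact AlgHom.congr_fun this s

lemma IsMinGen.subst_injective (h : IsMinGen M d b) : Function.Injective (subst K b) := by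
  have key : ∀ w : List Y, ∀ s, subst K b s = 0 → (word K Y).repr s w = 0 := by
    intro w
    induction w with
    | nil => intro s hs; rw [← aug_eq_repr, ← h.aug_subst, hs, map_zero]
    | cons j w ih =>
      intro s hs
      have h0 : aug K Y s = 0 := by rw [← h.aug_subst, hs, map_zero]
      have h1 := h.eq_zero_of_sum (a := (stripLeft s).mapRange (subst K b) (map_zero _)) (by
        rw [Finsupp.sum_mapRange_index (by simp), ← hs]
        conv_rhs => rw [eq_aug_add_stripLeft s, h0, map_zero, zero_add, Finsupp.sum, map_sum]
        exact Finset.sum_congr rfl fun i _ => by simp)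
      rw [← repr_stripLeft]
      exact ih _ (by simpa using DFunLike.congr_fun h1 j)
  refine (injective_iff_map_eq_zero _).2 fun s hs => ?_
  refine (word K Y).repr.injective (Finsupp.ext fun w => ?_)
  rw [key w s hs]; simp

lemma IsMinGen.comul_subst (h : IsMinGen M d b) (s : FreeAlgebra K Y) :
    comul K X (subst K b s) =
      Algebra.TensorProduct.map (subst K b) (subst K b) (comul K Y s) := by
  have : (comul K X).comp (subst K b) =
      (Algebra.TensorProduct.map (subst K b) (subst K b)).comp (comul K Y) := by
    ext j
    have hj : comul K X (b j) = b j ⊗ₜ 1 + 1 ⊗ₜ b j := h.prim _ _ (h.mem j)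
    simp [hj]
  exact AlgHom.congr_fun this s

lemma IsMinGen.isPrim_of_subst (h : IsMinGen M d b) {s : FreeAlgebra K Y}
    (hs : IsPrim (subst K b s)) : IsPrim s := by
  have hinj : Function.Injective
      (TensorProduct.map (subst K b).toLinearMap (subst K b).toLinearMap) :=
    TensorProduct.map_injective_of_flat_flat _ _ h.subst_injective h.subst_injective
  refine hinj ?_
  have h1 : TensorProduct.map (subst K b).toLinearMap (subst K b).toLinearMap (comul K Y s) =
      comul K X (subst K b s) := (h.comul_subst s).symm
  rw [h1, hs]
  simp

lemma IsMinGen.subst_word_mem (h : IsMinGen M d b) (w : List Y) :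
    subst K b (word K Y w) ∈ wtPart K one1 {wt d w} := by
  induction w with
  | nil => rw [word_nil, map_one, ← word_nil]; exact word_mem_wtPart rfl
  | cons j w ih =>
    rw [word_cons, map_mul, FreeAlgebra.lift_ι_apply]
    exact mul_mem_wtPart (by simp) (h.homog _ (h.mem j)) ih

lemma IsMinGen.proj_subst (h : IsMinGen M d b) (n : ℕ) (s : FreeAlgebra K Y) :
    proj one1 n (subst K b s) = subst K b (proj d n s) := by
  have := (word K Y).ext (f₁ := proj one1 n ∘ₗ (subst K b).toLinearMap)
    (f₂ := (subst K b).toLinearMap ∘ₗ proj d n) (fun w => by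
      rw [LinearMap.comp_apply, LinearMap.comp_apply, AlgHom.toLinearMap_apply,
        AlgHom.toLinearMap_apply, proj_of_mem (h.subst_word_mem w),
        proj_of_mem (word_mem_wtPart (Set.mem_singleton _))]
      split_ifs <;> simp)
  exact LinearMap.congr_fun this s

/-- Each element of `M n` is a homogeneous Lie polynomial in the minimal generators. -/
lemma IsMinGen.exists_lie [CharZero K] (h : IsMinGen M d b) {n : ℕ} {m : FreeAlgebra K X}
    (hm : m ∈ M n) :
    ∃ g, subst K b (inc K Y g) = m ∧ inc K Y g ∈ wtPart K d {n} := by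
  obtain ⟨s, hs⟩ := h.mem_range hm
  have hs' : subst K b s = m := hs
  obtain ⟨g, rfl⟩ := exists_inc_of_isPrim (h.isPrim_of_subst (hs' ▸ h.prim n m hm))
  refine ⟨g, hs', ?_⟩
  have h1 : proj d n (inc K Y g) = inc K Y g := by
    apply h.subst_injective
    rw [← h.proj_subst, hs', proj_of_mem (h.homog n hm), if_pos rfl]
  rw [← h1]
  exact proj_mem _ _ _

/-! ### Perturbing the generators by terms of lower degree -/

lemma IsMinGen.subst_sub_subst_word_mem (h : IsMinGen M d b) {y : Y → FreeAlgebra K X}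
    (hy : ∀ j, y j - b j ∈ wtPart K one1 (Set.Iio (d j))) (w : List Y) :
    subst K y (word K Y w) - subst K b (word K Y w) ∈ wtPart K one1 (Set.Iio (wt d w)) := by
  induction w with
  | nil => simp
  | cons j w ih =>
    have h1 : subst K y (word K Y w) ∈ wtPart K one1 (Set.Iio (wt d w + 1)) := by
      rw [← sub_add_cancel (subst K y (word K Y w)) (subst K b (word K Y w))]
      refine add_mem (wtPart_mono (Set.Iio_subset_Iio (Nat.le_succ _)) ih)
        (wtPart_mono ?_ (h.subst_word_mem w))
      simp
    have h2 : subst K y (word K Y (j :: w)) - subst K b (word K Y (j :: w)) =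
        (y j - b j) * subst K y (word K Y w) +
          b j * (subst K y (word K Y w) - subst K b (word K Y w)) := by
      rw [word_cons, map_mul, map_mul, FreeAlgebra.lift_ι_apply, FreeAlgebra.lift_ι_apply]
      noncomm_ring
    rw [h2]
    refine add_mem (mul_mem_wtPart ?_ (hy j) h1) (mul_mem_wtPart ?_ (h.homog _ (h.mem j)) ih)
    · simp only [Set.mem_Iio, wt_cons]; omega
    · simp

lemma IsMinGen.subst_sub_subst_mem (h : IsMinGen M d b) {y : Y → FreeAlgebra K X}
    (hy : ∀ j, y j - b j ∈ wtPart K one1 (Set.Iio (d j))) {n : ℕ} {s : FreeAlgebra K Y}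
    (hs : s ∈ wtPart K d {n}) :
    subst K y s - subst K b s ∈ wtPart K one1 (Set.Iio n) := by
  suffices wtPart K d {n} ≤ (wtPart K one1 (Set.Iio n)).comap
      ((subst K y).toLinearMap - (subst K b).toLinearMap) from this hs
  refine Submodule.span_le.2 ?_
  rintro _ ⟨w, rfl, rfl⟩
  exact h.subst_sub_subst_word_mem hy w

lemma IsMinGen.subst_mem (h : IsMinGen M d b) {y : Y → FreeAlgebra K X}
    (hy : ∀ j, y j - b j ∈ wtPart K one1 (Set.Iio (d j))) {n : ℕ} {s : FreeAlgebra K Y}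
    (hs : s ∈ wtPart K d (Set.Iio n)) : subst K y s ∈ wtPart K one1 (Set.Iio n) := by
  suffices wtPart K d (Set.Iio n) ≤
      (wtPart K one1 (Set.Iio n)).comap (subst K y).toLinearMap from this hs
  refine Submodule.span_le.2 ?_
  rintro _ ⟨w, hw, rfl⟩
  have hlt : wt d w < n := hw
  change subst K y (word K Y w) ∈ wtPart K one1 (Set.Iio n)
  rw [← sub_add_cancel (subst K y (word K Y w)) (subst K b (word K Y w))]
  refine add_mem (wtPart_mono (Set.Iio_subset_Iio hlt.le) (h.subst_sub_subst_word_mem hy w))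
    (wtPart_mono ?_ (h.subst_word_mem w))
  simpa using hlt

/-- Elements with free leading terms are themselves free generators of a free algebra. -/
lemma IsMinGen.subst_injective_of_lead (h : IsMinGen M d b) {y : Y → FreeAlgebra K X}
    (hy : ∀ j, y j - b j ∈ wtPart K one1 (Set.Iio (d j))) : Function.Injective (subst K y) := by
  have key : ∀ n, ∀ s ∈ wtPart K d (Set.Iio n), subst K y s = 0 → s = 0 := by
    intro n
    induction n with
    | zero => intro s hs _; exact wtPart_empty (by ext; simp) hs
    | succ n ih =>
      intro s hs h0
      have h1 := h.subst_sub_subst_mem hy (proj_mem d n s)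
      have h2 := h.subst_mem hy (sub_proj_mem hs)
      have h3 : subst K b (proj d n s) ∈ wtPart K one1 (Set.Iio n) := by
        have := neg_mem (add_mem h1 h2)
        rw [map_sub, h0] at this
        simpa using this
      have h4 : proj d n s = 0 := by
        apply h.subst_injective
        rw [map_zero]
        refine wtPart_disjoint ?_ h3 (h.proj_subst n s ▸ proj_mem one1 n _)
        ext; simp +contextual
      refine ih s ?_ h0
      simpa [h4] using sub_proj_mem hs
  refine (injective_iff_map_eq_zero _).2 fun s hs => ?_
  obtain ⟨n, hn⟩ := exists_mem_Iio d s
  exact key n s hn hs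

/-! ### Leading terms of a Lie subalgebra -/

/-- Minimal generators are obtained from bases of complements, in each `M n`, of its decomposable
elements. -/
lemma exists_isMinGen (M : ℕ → Submodule K (FreeAlgebra K X))
    (homog : ∀ n, M n ≤ wtPart K one1 {n}) (prim : ∀ n, ∀ m ∈ M n, IsPrim m) :
    ∃ (Y : Type (max u v)) (d : Y → ℕ) (b : Y → FreeAlgebra K X), IsMinGen M d b := by
  have hC : ∀ n, ∃ C : Submodule K (FreeAlgebra K X), C ≤ M n ∧ C ⊓ decomp M n = ⊥ ∧
      M n ≤ C ⊔ decomp M n := by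
    intro n
    obtain ⟨D, hD⟩ := exists_isCompl (M n ⊓ decomp M n)
    refine ⟨M n ⊓ D, inf_le_left, ?_, ?_⟩
    · rw [eq_bot_iff, ← hD.inf_eq_bot]
      exact le_inf (le_inf (inf_le_left.trans inf_le_left) inf_le_right)
        (inf_le_left.trans inf_le_right)
    · have h1 : (M n ⊓ decomp M n) ⊔ D ⊓ M n = M n := by
        rw [← sup_inf_assoc_of_le D (inf_le_left : M n ⊓ decomp M n ≤ M n), hD.sup_eq_top,
          top_inf_eq]
      calc M n = (M n ⊓ decomp M n) ⊔ D ⊓ M n := h1.symm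
        _ ≤ _ := sup_le (inf_le_right.trans le_sup_right)
          ((inf_comm D (M n)).le.trans le_sup_left)
  choose C hCM hCQ hMC using hC
  refine ⟨Σ n, Basis.ofVectorSpaceIndex K (C n), Sigma.fst,
    fun j => (Basis.ofVectorSpace K (C j.1) j.2 : C j.1), homog, prim,
    fun j => hCM _ (Subtype.property _), fun n => ?_, fun n c hc hsum => ?_⟩
  · refine (hMC n).trans (sup_le_sup_right (fun x hx => ?_) _)
    have h1 := Submodule.mem_map_of_mem (f := (C n).subtype)
      ((Basis.ofVectorSpace K (C n)).mem_span ⟨x, hx⟩)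
    rw [Submodule.map_span] at h1
    refine Submodule.span_mono ?_ h1
    rintro _ ⟨_, ⟨i, rfl⟩, rfl⟩
    exact ⟨⟨n, i⟩, rfl, rfl⟩
  · let e : Basis.ofVectorSpaceIndex K (C n) → Σ n, Basis.ofVectorSpaceIndex K (C n) :=
      fun i => ⟨n, i⟩
    have hinj : Function.Injective e := fun i i' hi => by simpa [e] using hi
    have hsupp : (c.support : Set _) ⊆ Set.range e := by
      rintro ⟨k, i⟩ hi
      obtain rfl : k = n := hc ⟨k, i⟩ (by simpa using hi)
      exact ⟨i, rfl⟩
    have hc' := Finsupp.mapDomain_comapDomain _ hinj c hsupp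
    set c' := c.comapDomain e hinj.injOn
    rw [← hc', Finsupp.sum_mapDomain_index (by simp) (by simp [add_smul])] at hsum
    have h1 : (c'.sum fun i r => r • ((Basis.ofVectorSpace K (C n) i : C n) : FreeAlgebra K X)) =
        (Finsupp.linearCombination K (Basis.ofVectorSpace K (C n)) c' : C n) := by
      simp [Finsupp.linearCombination_apply, Finsupp.sum]
    have h2 : (Finsupp.linearCombination K (Basis.ofVectorSpace K (C n)) c' : C n) = 0 := by
      have h3 : ((Finsupp.linearCombination K (Basis.ofVectorSpace K (C n)) c' : C n) :
          FreeAlgebra K X) ∈ C n ⊓ decomp M n := ⟨Subtype.property _, h1 ▸ hsum⟩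
      rw [hCQ] at h3
      simpa using h3
    rw [← hc', linearIndependent_iff.1 (Basis.ofVectorSpace K (C n)).linearIndependent c' h2,
      Finsupp.mapDomain_zero]

/-- The space of leading terms of degree `n` of elements of `L`: degree `n` components of the
elements of degree at most `n`. -/
def lead (L : LieSubalgebra K (FreeLieAlgebra K X)) (n : ℕ) : Submodule K (FreeAlgebra K X) :=
  (L.toSubmodule.map (inc K X : FreeLieAlgebra K X →ₗ[K] FreeAlgebra K X) ⊓
    wtPart K one1 (Set.Iio (n + 1))).map (proj one1 n)

lemma exists_of_mem_lead {L : LieSubalgebra K (FreeLieAlgebra K X)} {n : ℕ}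
    {m : FreeAlgebra K X} (hm : m ∈ lead L n) :
    ∃ l ∈ L, inc K X l ∈ wtPart K one1 (Set.Iio (n + 1)) ∧ proj one1 n (inc K X l) = m := by
  obtain ⟨_, ⟨⟨l, hl, rfl⟩, h1⟩, rfl⟩ := hm
  exact ⟨l, hl, h1, rfl⟩

lemma exists_isMinGen_lead (L : LieSubalgebra K (FreeLieAlgebra K X)) :
    ∃ (Y : Type (max u v)) (d : Y → ℕ) (b : Y → FreeAlgebra K X), IsMinGen (lead L) d b := by
  refine exists_isMinGen _ (fun n m hm => ?_) (fun n m hm => ?_)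
  · obtain ⟨l, -, -, rfl⟩ := exists_of_mem_lead hm
    exact proj_mem _ _ _
  · obtain ⟨l, -, -, rfl⟩ := exists_of_mem_lead hm
    obtain ⟨g, hg⟩ := proj_inc_mem n l
    rw [← hg]
    exact isPrim_inc g

/-- Lifts to `L` of a minimal family of leading terms freely generate `L`. -/
lemma exists_lift_bijective [CharZero K] (L : LieSubalgebra K (FreeLieAlgebra K X))
    (h : IsMinGen (lead L) d b) :
    ∃ y : Y → L, Function.Bijective (FreeLieAlgebra.lift K y) := by
  have hex : ∀ j, ∃ l : L, inc K X l - b j ∈ wtPart K one1 (Set.Iio (d j)) := by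
    intro j
    obtain ⟨l, hl, h1, h2⟩ := exists_of_mem_lead (h.mem j)
    exact ⟨⟨l, hl⟩, by rw [← h2]; exact sub_proj_mem h1⟩
  choose y hy using hex
  have hφ : ∀ g, inc K X (FreeLieAlgebra.lift K y g) =
      subst K (fun j => inc K X (y j)) (inc K Y g) := by
    intro g
    have : ((inc K X).comp L.incl).comp (FreeLieAlgebra.lift K y) =
        (subst K (fun j => inc K X (y j)) : FreeAlgebra K Y →ₗ⁅K⁆ FreeAlgebra K X).comp
          (inc K Y) := by
      ext j
      simp
    exact LieHom.congr_fun this g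
  refine ⟨y, ?_, ?_⟩
  · intro g g' hg
    apply inc_injective
    apply h.subst_injective_of_lead hy
    rw [← hφ, ← hφ, hg]
  · have key : ∀ n, ∀ l : L, inc K X l ∈ wtPart K one1 (Set.Iio n) →
        ∃ g, FreeLieAlgebra.lift K y g = l := by
      intro n
      induction n with
      | zero =>
        intro l hl
        refine ⟨0, Subtype.ext (inc_injective ?_)⟩
        rw [wtPart_empty (by ext; simp) hl]
        simp
      | succ n ih =>
        intro l hl
        obtain ⟨g, hg, hgn⟩ := h.exists_lie (n := n) (m := proj one1 n (inc K X l))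
          ⟨_, ⟨⟨_, l.2, rfl⟩, hl⟩, rfl⟩
        -- `g` reproduces the leading term of `l`, so the difference has lower degree
        obtain ⟨g', hg'⟩ := ih (l - FreeLieAlgebra.lift K y g) (by
          have h1 := sub_mem (sub_proj_mem hl) (h.subst_sub_subst_mem hy hgn)
          rw [hg, ← hφ] at h1
          rw [AddSubgroupClass.coe_sub, map_sub]
          convert h1 using 1
          abel)
        exact ⟨g' + g, by rw [map_add, hg', sub_add_cancel]⟩
    intro l
    obtain ⟨n, hn⟩ := exists_mem_Iio one1 (inc K X l)
    exact key n l hn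

end ShirshovWitt

end

/-- Shirshov–Witt theorem: every Lie subalgebra of a free Lie algebra over a field of
characteristic zero is itself a free Lie algebra. -/
theorem lieSubalgebra_of_free_is_free
    (K : Type u) [Field K] [CharZero K] (X : Type v)
    (L : LieSubalgebra K (FreeLieAlgebra K X)) :
    ∃ Y : Type (max u v), Nonempty (L ≃ₗ⁅K⁆ FreeLieAlgebra K Y) := by
  obtain ⟨Y, d, b, h⟩ := ShirshovWitt.exists_isMinGen_lead L
  obtain ⟨y, hy⟩ := ShirshovWitt.exists_lift_bijective L h
  exact ⟨Y, ⟨(LieEquiv.ofBijective _ hy).symm⟩⟩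
end

section
/- The Weyl determinant of type C factorizes as a product: det((x_i^j − x_i^{−j})_{1≤i,j≤n}) = (∏_{i=1}^n x_i^{−n}) · (∏_{i=1}^n (x_i² − 1)) · (∏_{1≤i<j≤n} (x_i − x_j)(1 − x_i x_j)). -/
/-!
With `y = x + x⁻¹`, the entry `x ^ (j + 1) - x⁻¹ ^ (j + 1)` equals `(x - x⁻¹) * S_j(y)`, where `S_j`
is the rescaled Chebyshev polynomial of the second kind, monic of degree `j`. Pulling the factors
`x i - (x i)⁻¹` out of the rows leaves a determinant of evaluations of monic polynomials of degrees
`0, …, n - 1`, which is the Vandermonde determinant `∏_{i<j} (y j - y i)`. Finally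
`y j - y i = (x i)⁻¹ * (x j)⁻¹ * ((x i - x j) * (1 - x i * x j))`, and each `(x i)⁻¹` occurs in
`n - 1` of these factors and once more in `x i - (x i)⁻¹ = (x i)⁻¹ * (x i ^ 2 - 1)`.
-/

open Finset

open Polynomial in
theorem chebyshevS_monic_degree (K : Type*) [Field K] (n : ℕ) :
    (Chebyshev.S K n).Monic ∧ (Chebyshev.S K n).degree = n := by
  induction n using Nat.twoStepInduction with
  | zero => simp
  | one => simp [monic_X]
  | more n ih₁ ih₂ =>
    have hS : Chebyshev.S K ((n + 2 : ℕ) : ℤ)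
        = X * Chebyshev.S K ((n + 1 : ℕ) : ℤ) - Chebyshev.S K (n : ℤ) := by
      push_cast
      exact Chebyshev.S_add_two K n
    have hd : (X * Chebyshev.S K ((n + 1 : ℕ) : ℤ)).degree = ((n + 2 : ℕ) : WithBot ℕ) := by
      rw [degree_mul, ih₂.2, degree_X]
      norm_cast
      omega
    have hlt : (Chebyshev.S K (n : ℤ)).degree
        < (X * Chebyshev.S K ((n + 1 : ℕ) : ℤ)).degree := by
      rw [hd, ih₁.2]
      norm_cast
      omega
    rw [hS]
    exact ⟨(monic_X.mul ih₂.1).sub_of_left hlt, by rw [degree_sub_eq_left_of_degree_lt hlt, hd]⟩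

open Polynomial in
theorem sub_inv_mul_chebyshevS_eval {K : Type*} [Field K] {x : K} (hx : x ≠ 0) (n : ℕ) :
    x ^ (n + 1) - x⁻¹ ^ (n + 1) = (x - x⁻¹) * (Chebyshev.S K n).eval (x + x⁻¹) := by
  induction n using Nat.twoStepInduction with
  | zero => simp
  | one => simp; ring
  | more n ih₁ ih₂ =>
    have hS : Chebyshev.S K ((n + 2 : ℕ) : ℤ)
        = X * Chebyshev.S K ((n + 1 : ℕ) : ℤ) - Chebyshev.S K (n : ℤ) := by
      push_cast
      exact Chebyshev.S_add_two K n
    rw [hS, eval_sub, eval_mul, eval_X, mul_sub, mul_left_comm, ← ih₁, ← ih₂]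
    have h : x * x⁻¹ = 1 := mul_inv_cancel₀ hx
    linear_combination (x⁻¹ ^ (n + 1) - x ^ (n + 1)) * h

theorem prod_Ioi_mul_eq_prod_pow {K : Type*} [Field K] (n : ℕ) (z : Fin n → K) :
    ∏ i, ∏ j ∈ Finset.Ioi i, z j * z i = ∏ i, z i ^ (n - 1) := by
  simp_rw [mul_comm (z _) (z _)]
  rw [Finset.prod_prod_Ioi_mul_eq_prod_prod_off_diag (fun _ i => z i)]
  simp [Finset.card_compl]

/-- Factorization of the Weyl determinant of type `C(n)`:
`det((x_i^j − x_i^{−j})) = ∏ x_i^{−n} · ∏ (x_i² − 1) · ∏_{i<j} (x_i − x_j)(1 − x_i x_j)`. -/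
theorem weyl_determinant_C_factorization
    {K : Type*} [Field K] (n : ℕ) (x : Fin n → K) (hx : ∀ i, x i ≠ 0) :
    Matrix.det (Matrix.of fun i j : Fin n =>
        x i ^ ((j : ℕ) + 1) - (x i)⁻¹ ^ ((j : ℕ) + 1)) =
      (∏ i, (x i)⁻¹ ^ n) * (∏ i, (x i ^ 2 - 1)) *
        ∏ i, ∏ j ∈ Finset.Ioi i, (x i - x j) * (1 - x i * x j) := by
  have hV := Matrix.det_eval_matrixOfPolynomials_eq_det_vandermonde
    (fun i => x i + (x i)⁻¹) (fun j : Fin n => Polynomial.Chebyshev.S K ((j : ℕ) : ℤ))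
    (fun j => Polynomial.natDegree_eq_of_degree_eq_some (chebyshevS_monic_degree K j).2)
    (fun j => (chebyshevS_monic_degree K j).1)
  have hy : ∀ i j, (x j + (x j)⁻¹) - (x i + (x i)⁻¹)
      = ((x j)⁻¹ * (x i)⁻¹) * ((x i - x j) * (1 - x i * x j)) := by
    intro i j
    have := hx i
    have := hx j
    field_simp
    ring
  have hrow : ∏ i, (x i - (x i)⁻¹) * (x i)⁻¹ ^ (n - 1)
      = ∏ i, (x i)⁻¹ ^ n * (x i ^ 2 - 1) := by
    refine Finset.prod_congr rfl fun i _ => ?_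
    -- `i : Fin n` forces `n ≥ 1`, so the subtraction `n - 1` does not truncate.
    obtain ⟨m, rfl⟩ : ∃ m, n = m + 1 := ⟨n - 1, by have := i.isLt; omega⟩
    have := hx i
    rw [Nat.add_sub_cancel, pow_succ]
    field_simp
  simp_rw [fun i (j : Fin n) => sub_inv_mul_chebyshevS_eval (hx i) (j : ℕ)]
  have hdet := Matrix.det_mul_column (fun i => x i - (x i)⁻¹) (Matrix.of fun i j : Fin n =>
    (Polynomial.Chebyshev.S K ((j : ℕ) : ℤ)).eval (x i + (x i)⁻¹))
  simp only [Matrix.of_apply] at hdet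
  rw [hdet, ← hV, Matrix.det_vandermonde]
  simp_rw [hy, Finset.prod_mul_distrib (f := fun j => (x j)⁻¹ * (x _)⁻¹)]
  rw [Finset.prod_mul_distrib, prod_Ioi_mul_eq_prod_pow n (fun i => (x i)⁻¹), ← mul_assoc,
    ← Finset.prod_mul_distrib, hrow, Finset.prod_mul_distrib]
end

section
/- det((x_i^{j+1} − x_i^{−j−1})_{1≤i,j≤n}) = Δ_{C(n)}(x₁,…,xₙ) · (∏_{i=1}^n x_i^{−1}) · (Σ_{j=0}^{n} (e_j² − e_j e_{j+2})), where the left-hand side is the determinant of the n × n matrix whose (i,j)-entry is x_i^{j+1} − x_i^{−j−1}. -/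
/-!
Write `f_k(y) = y^k - y^{-k}`, `a_j = (-1)^j e_j` and `E(y) = ∑ a_j y^j = ∏ (1 - x_i y)`.
Expanding the Laurent polynomial `(y - y⁻¹) E(y) E(y⁻¹)` gives
`∑_{k=0}^{n} (c_k - c_{k+2}) f_{k+1}(y)` with the autocorrelations `c_k = ∑_j a_j a_{j+k}`
(`sum_autocorr_eq`). It vanishes at every `y = x_i`, because `E(x_i⁻¹) = 0`
(`sum_esymm_eq_zero`). So the `n + 1` vectors `v_k = (f_{k+1}(x_i))_i`, `0 ≤ k ≤ n`, satisfy a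
linear relation with coefficients `d_k = c_k - c_{k+2}`. By Cramer's rule
(`det_relation`), `d_n (-1)^n det(v_1, …, v_n) = d_0 det(v_0, …, v_{n-1})`. Here
`d_0 = ∑ (e_j² - e_j e_{j+2})` and `d_n = a_0 a_n = (-1)^n ∏ x_i`, which is the claim.
-/

open Finset


/-- The autocorrelation at lag `k` of the first `N` terms of `a`. The subtraction `N - k`
truncates, so the value is `0` for lags `k ≥ N`. -/
def autocorr {K : Type*} [Field K] (a : ℕ → K) (N k : ℕ) : K :=
  ∑ j ∈ range (N - k), a j * a (j + k)

lemma autocorr_of_le {K : Type*} [Field K] (a : ℕ → K) {N k : ℕ} (h : N ≤ k) :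
    autocorr a N k = 0 := by
  simp [autocorr, Nat.sub_eq_zero_of_le h]

lemma autocorr_succ {K : Type*} [Field K] (a : ℕ → K) {N k : ℕ} (h : k ≤ N) :
    autocorr a (N + 1) k = autocorr a N k + a (N - k) * a N := by
  rw [autocorr, Nat.sub_add_comm h, sum_range_succ, Nat.sub_add_cancel h, autocorr]

/-- Terms beyond a bound `n` on the support of `a` do not contribute to the autocorrelation. -/
lemma autocorr_eq_sum {K : Type*} [Field K] (a : ℕ → K) (n k : ℕ) (h : ∀ j, n < j → a j = 0) :
    autocorr a (n + 1) k = ∑ j ∈ range (n + 1), a j * a (j + k) := by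
  refine sum_subset (range_subset_range.2 (Nat.sub_le _ _)) fun j _ hj => ?_
  rw [h (j + k) (by simp only [mem_range] at hj; omega), mul_zero]

/-- Summation by parts for a second-order difference. -/
lemma sum_by_parts {K : Type*} [Field K] (T f h : ℕ → K) (h0 : h 0 = f 1) (f0 : f 0 = 0)
    (hs : ∀ k, h (k + 1) = f (k + 2) - f k) (M : ℕ) :
    ∑ k ∈ range (M + 1), (T k - T (k + 2)) * f (k + 1) =
      ∑ k ∈ range (M + 1), T k * h k - T (M + 1) * f M - T (M + 2) * f (M + 1) := by
  induction M with
  | zero => simp [h0, f0]; ring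
  | succ M ih =>
    rw [sum_range_succ, ih, sum_range_succ _ (M + 1), hs]
    ring

/-- The product `(y - z) (∑ a_i y^i) (∑ a_j z^j)` with `y z = 1`, grouped by the distance `k`
between the exponents `i` and `j`; `h k` stands for `(y - z) (y^k + z^k)`, except that the diagonal `k = 0` is counted
once. -/
lemma mul_eq_sum_autocorr {K : Type*} [Field K] (a h : ℕ → K) (y z : K) (hyz : y * z = 1)
    (h0 : h 0 = y - z) (hs : ∀ k, h (k + 1) = (y - z) * (y ^ (k + 1) + z ^ (k + 1))) (N : ℕ) :
    (y - z) * ((∑ j ∈ range N, a j * y ^ j) * ∑ j ∈ range N, a j * z ^ j) =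
      ∑ k ∈ range N, autocorr a N k * h k := by
  induction N with
  | zero => simp
  | succ N ih =>
    have e1 : ∑ k ∈ range (N + 1), autocorr a (N + 1) k * h k =
        ∑ k ∈ range N, autocorr a N k * h k +
          ∑ k ∈ range (N + 1), a (N - k) * a N * h k := by
      rw [sum_congr rfl fun k hk => by
        rw [autocorr_succ a (Nat.lt_succ_iff.1 (mem_range.1 hk)), add_mul],
        sum_add_distrib, sum_range_succ, autocorr_of_le a le_rfl, zero_mul, add_zero]
    have e2 : ∑ k ∈ range (N + 1), a (N - k) * a N * h k =
        (y - z) * (a N * a N + a N * z ^ N * (∑ j ∈ range N, a j * y ^ j)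
          + a N * y ^ N * ∑ j ∈ range N, a j * z ^ j) := by
      rw [← sum_range_reflect, sum_range_succ]
      have : ∀ j ∈ range N, a (N - (N + 1 - 1 - j)) * a N * h (N + 1 - 1 - j) =
          (y - z) * (a N * z ^ N * (a j * y ^ j) + a N * y ^ N * (a j * z ^ j)) := by
        intro j hj
        obtain ⟨m, rfl⟩ : ∃ m, N = j + (m + 1) :=
          ⟨N - j - 1, by have := mem_range.1 hj; omega⟩
        have h1 : j + (m + 1) + 1 - 1 - j = m + 1 := by omega
        have hp : y ^ j * z ^ j = 1 := by rw [← mul_pow, hyz, one_pow]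
        rw [h1, hs, Nat.add_sub_cancel, pow_add y, pow_add z]
        linear_combination (-(y - z) * a j * a (j + (m + 1)) * (y ^ (m + 1) + z ^ (m + 1))) * hp
      rw [sum_congr rfl this, ← mul_sum, sum_add_distrib, ← mul_sum, ← mul_sum]
      simp [h0]
      ring
    have hp : y ^ N * z ^ N = 1 := by rw [← mul_pow, hyz, one_pow]
    rw [e1, e2, ← ih, sum_range_succ, sum_range_succ]
    linear_combination (y - z) * a N * a N * hp

lemma sum_autocorr_eq {K : Type*} [Field K] (a : ℕ → K) (y z : K) (hyz : y * z = 1) (n : ℕ) :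
    ∑ k ∈ range (n + 1), (autocorr a (n + 1) k - autocorr a (n + 1) (k + 2)) *
        (y ^ (k + 1) - z ^ (k + 1)) =
      (y - z) * ((∑ j ∈ range (n + 1), a j * y ^ j) * ∑ j ∈ range (n + 1), a j * z ^ j) := by
  let h : ℕ → K := fun k => if k = 0 then y - z else (y - z) * (y ^ k + z ^ k)
  rw [mul_eq_sum_autocorr a h y z hyz (by simp [h]) (by simp [h]),
    sum_by_parts (autocorr a (n + 1)) (fun k => y ^ k - z ^ k) h (by simp [h]) (by simp),
    autocorr_of_le a le_rfl, autocorr_of_le a (Nat.le_succ _)]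
  · ring
  · intro k
    simp only [h, Nat.succ_ne_zero, if_false]
    linear_combination (z ^ k - y ^ k) * hyz

/-- The polynomial `∏ (1 - x_i z)` vanishes at `z = x_i⁻¹`. -/
lemma sum_esymm_eq_zero {K : Type*} [Field K] (n : ℕ) (x : Fin n → K) (e : ℕ → K)
    (he : ∀ j, e j = ∑ t ∈ powersetCard j (univ : Finset (Fin n)), ∏ i ∈ t, x i)
    (z : K) (i : Fin n) (hz : x i * z = 1) :
    ∑ j ∈ range (n + 1), (-1) ^ j * e j * z ^ j = 0 := by
  have h : ∏ i, (1 + -(x i * z)) = ∑ j ∈ range (n + 1), (-1) ^ j * e j * z ^ j := by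
    rw [prod_one_add, sum_powerset, card_univ, Fintype.card_fin]
    refine sum_congr rfl fun j _ => ?_
    rw [he, mul_sum, sum_mul]
    refine sum_congr rfl fun t ht => ?_
    rw [prod_neg, prod_mul_distrib, prod_const, (mem_powersetCard.1 ht).2]
    ring
  rw [← h]
  exact prod_eq_zero (mem_univ i) (by rw [hz]; ring)

/-- Cramer's rule for a linear relation `∑ d_k v_k = 0` between `n + 1` vectors in `K^n`: it
compares the minors omitting the first and the last vector. -/
lemma det_relation {K : Type*} [Field K] (n : ℕ) (v : Fin (n + 1) → Fin n → K)
    (d : Fin (n + 1) → K) (h : ∀ i, ∑ k, d k * v k i = 0) :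
    d (Fin.last n) * ((-1) ^ n * (Matrix.of fun i j : Fin n => v j.succ i).det) =
      d 0 * (Matrix.of fun i j : Fin n => v j.castSucc i).det := by
  -- The square matrix with rows `v_k`, bordered by a last column equal to the first unit vector.
  let V : Matrix (Fin (n + 1)) (Fin (n + 1)) K :=
    Matrix.of fun k => Fin.snoc (α := fun _ => K) (v k) (if k = 0 then 1 else 0)
  have hV : V.det = (-1) ^ n * (Matrix.of fun i j : Fin n => v j.succ i).det := by
    rw [Matrix.det_succ_column V (Fin.last n), sum_eq_single 0]
    · rw [← Matrix.det_transpose (Matrix.of fun i j : Fin n => v j.succ i)]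
      have : V.submatrix (Fin.succAbove 0) (Fin.succAbove (Fin.last n)) =
          (Matrix.of fun i j : Fin n => v j.succ i).transpose := by
        ext k i
        simp [V]
      rw [this]
      simp [V]
    · intro k _ hk
      simp [V, hk]
    · simp
  have hrow : ∑ k, d k • V k = Fin.snoc (α := fun _ => K) (fun _ : Fin n => (0 : K)) (d 0) := by
    ext j
    refine Fin.lastCases ?_ (fun i => ?_) j
    · simp [V, Finset.sum_apply]
    · simpa [V, Finset.sum_apply] using h i
  have hU := Matrix.det_updateRow_sum V (Fin.last n) d
  rw [hrow, hV, smul_eq_mul] at hU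
  rw [← hU, Matrix.det_succ_row _ (Fin.last n), sum_eq_single (Fin.last n)]
  · rw [← Matrix.det_transpose (Matrix.of fun i j : Fin n => v j.castSucc i)]
    have : (V.updateRow (Fin.last n) (Fin.snoc (α := fun _ => K) (fun _ => 0) (d 0))).submatrix
        (Fin.succAbove (Fin.last n)) (Fin.succAbove (Fin.last n)) =
          (Matrix.of fun i j : Fin n => v j.castSucc i).transpose := by
      ext k i
      simp [V, Matrix.updateRow_apply, Fin.castSucc_ne_last]
    rw [this]
    simp [← two_mul]
  · intro k _ hk
    obtain ⟨i, rfl⟩ := Fin.exists_castSucc_eq.2 hk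
    simp
  · simp

/-- The shifted Weyl determinant of type `C(n)`:
`det((x_i^{j+1} − x_i^{−j−1})) = Δ_{C(n)} · ∏ x_i^{−1} · Σ_{j=0}^{n} (e_j² − e_j e_{j+2})`,
where `Δ_{C(n)} = det((x_i^j − x_i^{−j}))` and `e_j` is the `j`-th elementary symmetric
polynomial in `x₁, …, xₙ` (with `e₀ = 1` and `e_j = 0` for `j > n`). -/
theorem shifted_weyl_determinant_C
    {K : Type*} [Field K] (n : ℕ) (x : Fin n → K) (hx : ∀ i, x i ≠ 0)
    (e : ℕ → K)
    (he : ∀ j, e j = ∑ t ∈ Finset.powersetCard j (Finset.univ : Finset (Fin n)),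
        ∏ i ∈ t, x i) :
    Matrix.det (Matrix.of fun i j : Fin n =>
        x i ^ ((j : ℕ) + 2) - (x i)⁻¹ ^ ((j : ℕ) + 2)) =
      Matrix.det (Matrix.of fun i j : Fin n =>
          x i ^ ((j : ℕ) + 1) - (x i)⁻¹ ^ ((j : ℕ) + 1)) *
        (∏ i, (x i)⁻¹) *
        ∑ j ∈ Finset.range (n + 1), (e j ^ 2 - e j * e (j + 2)) := by
  let a : ℕ → K := fun j => (-1) ^ j * e j
  have ha : ∀ j, n < j → a j = 0 := by
    intro j hj
    simp [a, he, powersetCard_eq_empty.2 (show (univ : Finset (Fin n)).card < j by simpa using hj)]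
  have hrel := det_relation n (fun k i => x i ^ ((k : ℕ) + 1) - (x i)⁻¹ ^ ((k : ℕ) + 1))
    (fun k => autocorr a (n + 1) k - autocorr a (n + 1) (k + 2)) fun i => by
      have h1 := sum_autocorr_eq a (x i) (x i)⁻¹ (mul_inv_cancel₀ (hx i)) n
      rw [sum_esymm_eq_zero n x e he _ i (mul_inv_cancel₀ (hx i)), mul_zero, mul_zero] at h1
      rw [← h1, ← Fin.sum_univ_eq_sum_range (fun k : ℕ =>
        (autocorr a (n + 1) k - autocorr a (n + 1) (k + 2)) *
          (x i ^ (k + 1) - (x i)⁻¹ ^ (k + 1)))]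
  have hd0 : autocorr a (n + 1) 0 - autocorr a (n + 1) (0 + 2) =
      ∑ j ∈ range (n + 1), (e j ^ 2 - e j * e (j + 2)) := by
    rw [autocorr_eq_sum a n _ ha, autocorr_eq_sum a n _ ha, ← sum_sub_distrib]
    refine sum_congr rfl fun j _ => ?_
    have hs : ((-1 : K) ^ j) * (-1) ^ j = 1 := by rw [← mul_pow]; simp
    simp only [a, add_zero, zero_add, pow_add]
    linear_combination (e j ^ 2 - e j * e (j + 2)) * hs
  have hdn : autocorr a (n + 1) n - autocorr a (n + 1) (n + 2) = (-1) ^ n * ∏ i, x i := by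
    have hn : powersetCard n (univ : Finset (Fin n)) = {univ} := by
      simpa using powersetCard_self (univ : Finset (Fin n))
    rw [autocorr_of_le a (Nat.le_succ _)]
    simp [autocorr, a, he, hn]
  have hP : ∏ i, x i ≠ 0 := prod_ne_zero_iff.2 fun i _ => hx i
  simp only [Fin.val_last, Fin.val_zero, Fin.val_succ, Fin.val_castSucc, hdn, hd0] at hrel
  have hs : ((-1 : K) ^ n) * (-1) ^ n = 1 := by rw [← mul_pow]; simp
  rw [prod_inv_distrib]
  refine mul_left_cancel₀ hP ?_
  have hi := mul_inv_cancel₀ hP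
  set S := ∑ j ∈ range (n + 1), (e j ^ 2 - e j * e (j + 2))
  set P := ∏ i, x i
  set D := Matrix.det (Matrix.of fun i j : Fin n =>
    x i ^ ((j : ℕ) + 1) - (x i)⁻¹ ^ ((j : ℕ) + 1))
  set L := Matrix.det (Matrix.of fun i j : Fin n =>
    x i ^ ((j : ℕ) + 2) - (x i)⁻¹ ^ ((j : ℕ) + 2))
  linear_combination hrel - P * L * hs - S * D * hi
end

section
/- The bilinear form B induces a well-defined nondegenerate pairing on the homology ker d / im d: for every a ∈ ker d, if B(a, b) = 0 for all b ∈ ker d, then a lies in the image of d; and symmetrically, for every a ∈ ker d, if B(b, a) = 0 for all b ∈ ker d, then a lies in the image of d. -/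
/-!
The map `a ↦ B a` is injective and carries `im d` into the annihilator of `ker d` in the dual of
`E`. By rank-nullity both spaces have dimension `dim E - dim (ker d)`, so `B` maps `im d` onto this
annihilator. If `a` is left orthogonal to `ker d`, then `B a` lies in the annihilator, hence
`B a = B (d c)` for some `c`, and `a = d c` by injectivity. The other side follows by applying this
to the flipped form.
-/

/-- The left orthogonal of `ker d` is contained in `im d`. -/
lemma exists_eq_of_orthogonal_ker
    {K E : Type*} [Field K] [AddCommGroup E] [Module K E] [FiniteDimensional K E]
    (d : E →ₗ[K] E) (B : E →ₗ[K] E →ₗ[K] K)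
    (hB : ∀ a : E, (∀ b : E, B a b = 0) → a = 0)
    (horth : ∀ a b : E, d b = 0 → B (d a) b = 0)
    (a : E) (ha : ∀ b : E, d b = 0 → B a b = 0) : ∃ c : E, d c = a := by
  have hinj : Function.Injective B :=
    (injective_iff_map_eq_zero B).2 fun a h => hB a fun b => by simp [h]
  have hle : (LinearMap.range d).map B ≤ (LinearMap.ker d).dualAnnihilator := by
    rintro _ ⟨_, ⟨c, rfl⟩, rfl⟩
    exact (Submodule.mem_dualAnnihilator _).2 fun b hb => horth c b hb
  have heq : (LinearMap.range d).map B = (LinearMap.ker d).dualAnnihilator := by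
    have h₁ := Subspace.finrank_add_finrank_dualAnnihilator_eq (LinearMap.ker d)
    have h₂ := d.finrank_range_add_finrank_ker
    have h₃ := (Submodule.equivMapOfInjective B hinj (LinearMap.range d)).finrank_eq
    exact Submodule.eq_of_le_of_finrank_eq hle (by linarith)
  have hmem : B a ∈ (LinearMap.range d).map B :=
    heq ▸ (Submodule.mem_dualAnnihilator _).2 ha
  obtain ⟨_, ⟨c, rfl⟩, hc⟩ := hmem
  exact ⟨c, hinj hc⟩

/-- For a differential `d` on a finite-dimensional vector space with a bilinear form `B`,
nondegenerate on both sides, such that the image of `d` is orthogonal to the kernel of `d`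
on both sides, `B` induces a nondegenerate pairing on the homology `ker d / im d`:
any cycle orthogonal (on either side) to all cycles is a boundary. -/
theorem homology_pairing_nondegenerate
    {K E : Type*} [Field K] [AddCommGroup E] [Module K E] [FiniteDimensional K E]
    (d : E →ₗ[K] E) (hdd : d ∘ₗ d = 0)
    (B : E →ₗ[K] E →ₗ[K] K)
    (hB₁ : ∀ a : E, (∀ b : E, B a b = 0) → a = 0)
    (hB₂ : ∀ b : E, (∀ a : E, B a b = 0) → b = 0)
    (horth₁ : ∀ a b : E, d b = 0 → B (d a) b = 0)
    (horth₂ : ∀ a b : E, d a = 0 → B a (d b) = 0) :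
    (∀ a : E, d a = 0 → (∀ b : E, d b = 0 → B a b = 0) → ∃ c : E, d c = a) ∧
      (∀ a : E, d a = 0 → (∀ b : E, d b = 0 → B b a = 0) → ∃ c : E, d c = a) := by
  exact ⟨fun a _ ha => exists_eq_of_orthogonal_ker d B hB₁ horth₁ a ha,
    fun a _ ha => exists_eq_of_orthogonal_ker d B.flip hB₂ (fun a b hb => horth₂ b a hb) a ha⟩
end

section
/- Let A = S/I where I ⊆ S is the ideal generated by all products xᵢ·xⱼ of the variables (equivalently, the square of the maximal ideal (x₁,…,xₙ)), so that A ≅ ℂ ⊕ V with V of dimension n and zero multiplication on V. Then for every p ≥ 1 the ℂ-vector space Tor_p^S(A, ℂ) is finite-dimensional of dimension p · C(n+1, p+1) (the binomial coefficient); in particular Tor_p^S(A, ℂ) = 0 for p > n. (This is the dimension of the irreducible GL_n-module corresponding to the hook Young diagram [2,1^{p−1}].) -/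
/-!
`Tor` is computed from the Koszul resolution `S ⊗ Λ^•(ℂⁿ)` of `ℂ`. That complex is exact because
the exterior derivative of polynomial forms is a homotopy from zero to multiplication by the total
degree of a form (`koszul_homotopy` and Euler's identity), which is invertible in characteristic
zero away from the constants (`koszulD_exact`).

Tensoring with `A = ℂ ⊕ V` gives the complex `A ⊗ Λ^•`, whose differential kills `V ⊗ Λ^p` and, for
`p ≥ 1`, embeds `Λ^p` into `V ⊗ Λ^{p-1}` (`ker_kD`). So in degree `p ≥ 1` the cycles are
`V ⊗ Λ^p`, of dimension `n · C(n, p)`, the boundaries have dimension `C(n, p+1)`, and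
`n · C(n, p) - C(n, p+1) = p · C(n+1, p+1)` (`choose_identity`).
-/

open CategoryTheory MvPolynomial

noncomputable section

/-- The polynomial ring `S = ℂ[x₁, …, xₙ]`. -/
abbrev Spoly (n : ℕ) : Type := MvPolynomial (Fin n) ℂ

/-- The ideal generated by all products `xᵢ · xⱼ` of the variables,
i.e. the square of the maximal ideal `(x₁, …, xₙ)`. -/
abbrev squaresIdeal (n : ℕ) : Ideal (Spoly n) :=
  Ideal.span {f : Spoly n | ∃ i j : Fin n, f = X i * X j}

/-- The algebra `A = S / (xᵢxⱼ) ≅ ℂ ⊕ V` with zero multiplication on `V`. -/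
abbrev Aalg (n : ℕ) : Type := Spoly n ⧸ squaresIdeal n

/-- `ℂ` regarded as an `S`-module via the augmentation sending each variable to `0`. -/
def CC (n : ℕ) : Type := ℂ

instance (n : ℕ) : AddCommGroup (CC n) := inferInstanceAs (AddCommGroup ℂ)

noncomputable instance (n : ℕ) : Module (Spoly n) (CC n) :=
  Module.compHom ℂ (MvPolynomial.eval (fun _ : Fin n => (0 : ℂ)))

/-- The `S`-module `Tor_p^S(A, ℂ)`. -/
noncomputable def TorModule (n p : ℕ) : ModuleCat (Spoly n) :=
  ((Tor (ModuleCat.{0} (Spoly n)) p).obj (ModuleCat.of (Spoly n) (Aalg n))).obj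
    (ModuleCat.of (Spoly n) (CC n))

/-- The `ℂ`-vector space structure on `Tor_p^S(A, ℂ)`, obtained by restriction of scalars
along `ℂ → S`. -/
noncomputable instance (n p : ℕ) : Module ℂ (TorModule n p) :=
  Module.compHom (TorModule n p) (algebraMap ℂ (Spoly n))

/-! ### The Koszul differential on all of the exterior algebra -/

/-- The sign `(-1)^#{j ∈ s | j < i}`, which for `i ∉ s` is the sign of sorting
`e_i ∧ e_s` into increasing order. -/
def koszulSign {n : ℕ} (i : Fin n) (s : Finset (Fin n)) : ℤ :=
  (-1) ^ (s.filter (· < i)).card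

lemma koszulSign_mul_self {n : ℕ} (i : Fin n) (s : Finset (Fin n)) :
    koszulSign i s * koszulSign i s = 1 := by
  simp [koszulSign, ← mul_pow]

lemma koszulSign_insert_self {n : ℕ} (i : Fin n) (s : Finset (Fin n)) :
    koszulSign i (insert i s) = koszulSign i s := by
  simp [koszulSign, Finset.filter_insert]

lemma koszulSign_insert {n : ℕ} {i j : Fin n} {s : Finset (Fin n)} (hj : j ∉ s) :
    koszulSign i (insert j s) = if j < i then -koszulSign i s else koszulSign i s := by
  unfold koszulSign
  rw [Finset.filter_insert]
  split_ifs with h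
  · rw [Finset.card_insert_of_notMem (by simp [hj]), pow_succ]; ring
  · rfl

/-- `e_i ∧ e_j = -e_j ∧ e_i`, in terms of signs. -/
lemma koszulSign_swap {n : ℕ} {i j : Fin n} {s : Finset (Fin n)} (hij : i ≠ j)
    (hi : i ∉ s) (hj : j ∉ s) :
    koszulSign i s * koszulSign j (insert i s) =
      -(koszulSign j s * koszulSign i (insert j s)) := by
  rw [koszulSign_insert hi, koszulSign_insert hj]
  rcases lt_or_gt_of_ne hij with h | h
  · rw [if_pos h, if_neg h.le.not_gt]; ring
  · rw [if_neg h.le.not_gt, if_pos h]; ring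

/-- The Koszul differential of `x₁, …, xₙ` with coefficients in `M`, on the sum of all degrees.
An element `∑ f(J) e_J` of `M ⊗ Λ(ℂⁿ)` is encoded as the function `f` on finite sets of indices;
contraction with `(x₁, …, xₙ)` then has `J`-component `∑_{i ∉ J} ± x_i f(J ∪ {i})`. -/
def koszulD (n : ℕ) (M : Type) [AddCommGroup M] [Module (Spoly n) M] :
    (Finset (Fin n) → M) →ₗ[Spoly n] (Finset (Fin n) → M) :=
  LinearMap.pi fun J => ∑ i ∈ Jᶜ, koszulSign i J • (X i : Spoly n) • LinearMap.proj (insert i J)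

lemma koszulD_apply {n : ℕ} {M : Type} [AddCommGroup M] [Module (Spoly n) M]
    (f : Finset (Fin n) → M) (J : Finset (Fin n)) :
    koszulD n M f J = ∑ i ∈ Jᶜ, koszulSign i J • (X i : Spoly n) • f (insert i J) := by
  simp [koszulD]

/-- The double sum over pairs `i ≠ j` outside `J` is antisymmetric, hence vanishes since `2` is
invertible. -/
lemma koszulD_koszulD {n : ℕ} {M : Type} [AddCommGroup M] [Module (Spoly n) M]
    (f : Finset (Fin n) → M) : koszulD n M (koszulD n M f) = 0 := by
  funext J
  let a : Fin n → Fin n → M := fun i j => if i = j then 0 else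
    (koszulSign i J * koszulSign j (insert i J)) •
      ((X i * X j : Spoly n) • f (insert j (insert i J)))
  have h1 : koszulD n M (koszulD n M f) J = ∑ i ∈ Jᶜ, ∑ j ∈ Jᶜ, a i j := by
    rw [koszulD_apply]
    refine Finset.sum_congr rfl fun i hi => ?_
    have : ∑ j ∈ Jᶜ, a i j = ∑ j ∈ (insert i J)ᶜ, a i j := by
      rw [Finset.compl_insert, ← Finset.add_sum_erase _ _ hi]
      simp [a]
    rw [this, koszulD_apply, Finset.smul_sum, Finset.smul_sum]
    refine Finset.sum_congr rfl fun j hj => ?_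
    have hij : i ≠ j := by rintro rfl; simp at hj
    simp only [a, if_neg hij, mul_smul]
    rw [smul_comm (X i : Spoly n) (koszulSign j (insert i J))]
  have h2 : ∑ i ∈ Jᶜ, ∑ j ∈ Jᶜ, a i j = -∑ i ∈ Jᶜ, ∑ j ∈ Jᶜ, a i j := by
    conv_lhs => rw [Finset.sum_comm]
    rw [← Finset.sum_neg_distrib]
    refine Finset.sum_congr rfl fun i hi => ?_
    rw [← Finset.sum_neg_distrib]
    refine Finset.sum_congr rfl fun j hj => ?_
    by_cases hij : i = j
    · simp [a, hij]
    · simp only [a, if_neg hij, if_neg (Ne.symm hij)]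
      rw [koszulSign_swap (Ne.symm hij) (by simpa using hj) (by simpa using hi), neg_smul,
        Finset.insert_comm, mul_comm (X i : Spoly n)]
  rw [h1, Pi.zero_apply]
  generalize ∑ i ∈ Jᶜ, ∑ j ∈ Jᶜ, a i j = T at h2
  have h3 : (2 : Spoly n) • T = 0 := by
    rw [two_smul]; nth_rewrite 1 [h2]; simp
  have h4 : (C (2⁻¹ : ℂ) * 2 : Spoly n) = 1 := by
    rw [show (2 : Spoly n) = C (2 : ℂ) from (map_ofNat C 2).symm, ← C_mul]; simp
  rw [← one_smul (Spoly n) T, ← h4, mul_smul, h3, smul_zero]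

/-- The exterior derivative `∑ f(J) e_J ↦ ∑ ∂_i f(J) e_i ∧ e_J` of polynomial differential
forms; a homotopy for the Koszul differential. -/
def koszulH {n : ℕ} (f : Finset (Fin n) → Spoly n) (J : Finset (Fin n)) : Spoly n :=
  ∑ i ∈ J, koszulSign i J • pderiv i (f (J.erase i))

/-- Cartan's formula for the Euler vector field: `DH + HD` acts on the coefficient of `e_J` as
the Euler operator `∑ x_i ∂_i` plus `|J|`. The cross terms of `DH` and `HD` cancel in pairs. -/
lemma koszul_homotopy {n : ℕ} (f : Finset (Fin n) → Spoly n) (J : Finset (Fin n)) :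
    koszulD n (Spoly n) (koszulH f) J + koszulH (koszulD n (Spoly n) f) J =
      ∑ i, X i * pderiv i (f J) + J.card • f J := by
  have h1 : koszulD n (Spoly n) (koszulH f) J = ∑ i ∈ Jᶜ, X i * pderiv i (f J) +
      ∑ i ∈ Jᶜ, ∑ k ∈ J, (koszulSign i J * koszulSign k (insert i J)) •
        (X i * pderiv k (f ((insert i J).erase k))) := by
    rw [koszulD_apply, ← Finset.sum_add_distrib]
    refine Finset.sum_congr rfl fun i hi => ?_
    have hi' : i ∉ J := by simpa using hi
    rw [koszulH, Finset.sum_insert hi', smul_add, smul_add, koszulSign_insert_self,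
      Finset.erase_insert hi', smul_comm (X i : Spoly n) (koszulSign i J), ← mul_smul,
      koszulSign_mul_self, one_smul, smul_eq_mul]
    congr 1
    rw [Finset.smul_sum, Finset.smul_sum]
    refine Finset.sum_congr rfl fun k hk => ?_
    rw [smul_comm (X i : Spoly n) (koszulSign _ _), ← mul_smul, smul_eq_mul]
  have h2 : koszulH (koszulD n (Spoly n) f) J = ∑ k ∈ J, pderiv k (X k * f J) +
      ∑ k ∈ J, ∑ i ∈ Jᶜ, (koszulSign k J * koszulSign i (J.erase k)) •
        (X i * pderiv k (f ((insert i J).erase k))) := by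
    rw [koszulH, ← Finset.sum_add_distrib]
    refine Finset.sum_congr rfl fun k hk => ?_
    rw [koszulD_apply, Finset.compl_erase, Finset.sum_insert (by simpa using hk), map_add,
      smul_add, Finset.insert_erase hk]
    congr 1
    · have : koszulSign k (J.erase k) = koszulSign k J := by
        rw [← koszulSign_insert_self, Finset.insert_erase hk]
      rw [this, map_zsmul, ← mul_smul, koszulSign_mul_self, one_smul, smul_eq_mul]
    · rw [map_sum, Finset.smul_sum]
      refine Finset.sum_congr rfl fun i hi => ?_
      have hik : i ≠ k := by rintro rfl; simp [hk] at hi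
      rw [map_zsmul, ← mul_smul, smul_eq_mul, Derivation.leibniz, pderiv_X_of_ne hik,
        Finset.erase_insert_of_ne hik]
      simp
  have h3 : ∑ k ∈ J, ∑ i ∈ Jᶜ, (koszulSign k J * koszulSign i (J.erase k)) •
        (X i * pderiv k (f ((insert i J).erase k))) = - ∑ i ∈ Jᶜ, ∑ k ∈ J,
        (koszulSign i J * koszulSign k (insert i J)) •
        (X i * pderiv k (f ((insert i J).erase k))) := by
    rw [Finset.sum_comm]
    simp only [← Finset.sum_neg_distrib]
    refine Finset.sum_congr rfl fun i hi => Finset.sum_congr rfl fun k hk => ?_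
    rw [← neg_smul]
    congr 1
    have hik : i ≠ k := by rintro rfl; simp [hk] at hi
    have hi' : i ∉ J := by simpa using hi
    have e := koszulSign_swap (s := J.erase k) (Ne.symm hik) (by simp) (by simp [hi'])
    rw [Finset.insert_erase hk] at e
    have e1 : koszulSign k (J.erase k) = koszulSign k J := by
      rw [← koszulSign_insert_self, Finset.insert_erase hk]
    have e2 : koszulSign k (insert i (J.erase k)) = koszulSign k (insert i J) := by
      rw [← koszulSign_insert_self, Finset.insert_comm, Finset.insert_erase hk]
    rw [e1, e2] at e
    have s1 := koszulSign_mul_self i J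
    have s2 := koszulSign_mul_self i (J.erase k)
    linear_combination (koszulSign i J * koszulSign i (J.erase k)) * e -
      (koszulSign k J * koszulSign i (J.erase k)) * s1 -
      (koszulSign i J * koszulSign k (insert i J)) * s2
  rw [h1, h2, h3]
  have h4 : ∑ k ∈ J, pderiv k (X k * f J) = ∑ k ∈ J, X k * pderiv k (f J) + J.card • f J := by
    simp [Derivation.leibniz, Finset.sum_add_distrib]
  rw [h4, ← Finset.sum_add_sum_compl J]
  ring

/-! ### Exactness of the Koszul complex -/

lemma homogeneousComponent_succ_X_mul {n : ℕ} (k : ℕ) (i : Fin n) (f : Spoly n) :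
    homogeneousComponent (k + 1) (X i * f) = X i * homogeneousComponent k f := by
  ext m
  rw [coeff_homogeneousComponent, coeff_X_mul', coeff_X_mul', coeff_homogeneousComponent]
  by_cases hi : i ∈ m.support
  · rw [if_pos hi, if_pos hi]
    have hm : m = (m - Finsupp.single i 1) + Finsupp.single i 1 := by
      ext j
      by_cases hj : i = j
      · subst hj
        have : m i ≠ 0 := by simpa using hi
        simp; omega
      · simp [hj]
    have hd : m.degree = (m - Finsupp.single i 1).degree + 1 := by
      conv_lhs => rw [hm]
      rw [map_add, Finsupp.degree_single]
    rw [hd]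
    simp
  · simp [hi]

lemma koszulD_homogeneousComponent {n : ℕ} (k : ℕ) (f : Finset (Fin n) → Spoly n) :
    koszulD n (Spoly n) (fun s => homogeneousComponent k (f s)) =
      fun s => homogeneousComponent (k + 1) (koszulD n (Spoly n) f s) := by
  funext J
  rw [koszulD_apply, koszulD_apply, map_sum]
  refine Finset.sum_congr rfl fun i _ => ?_
  rw [map_zsmul, smul_eq_mul, smul_eq_mul, homogeneousComponent_succ_X_mul]

/-- A cycle of degree `p` (with vanishing constant term if `p = 0`) is a boundary: on its
polynomial-degree-`k` component, `DH` is multiplication by `k + p`, and the only component with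
`k + p = 0` is zero. -/
lemma koszulD_exact {n : ℕ} (p : ℕ) (f : Finset (Fin n) → Spoly n)
    (hf : ∀ s, s.card ≠ p → f s = 0) (hD : koszulD n (Spoly n) f = 0)
    (h0 : p = 0 → coeff 0 (f ∅) = 0) :
    ∃ g, koszulD n (Spoly n) g = f := by
  -- `c k` is the part of `f` of polynomial degree `k`
  let c : ℕ → Finset (Fin n) → Spoly n := fun k s => homogeneousComponent k (f s)
  have hcD : ∀ k, koszulD n (Spoly n) (c k) = 0 := by
    intro k
    rw [koszulD_homogeneousComponent, hD]
    funext s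
    simp
  have hc0 : p = 0 → c 0 = 0 := by
    intro hp
    funext s
    by_cases hs : s = ∅
    · subst hs
      simp only [c, homogeneousComponent_zero, h0 hp]
      simp
    · have : f s = 0 := hf s (by simpa [hp] using hs)
      simp [c, this]
  have hH : ∀ k, koszulD n (Spoly n) (koszulH (c k)) = (C ((k + p : ℕ) : ℂ) : Spoly n) • c k := by
    intro k
    funext J
    have h := koszul_homotopy (c k) J
    have hz : koszulH (koszulD n (Spoly n) (c k)) J = 0 := by
      rw [hcD]; simp [koszulH]
    rw [hz, add_zero, (homogeneousComponent_isHomogeneous k (f J)).sum_X_mul_pderiv] at h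
    rw [h]
    by_cases hJ : J.card = p
    · rw [hJ, Pi.smul_apply, smul_eq_mul, map_natCast]
      simp only [c, nsmul_eq_mul]
      push_cast; ring
    · simp [c, hf J hJ]
  let N := Finset.univ.sup fun s => (f s).totalDegree + 1
  refine ⟨∑ k ∈ Finset.range N, (C (((k + p : ℕ) : ℂ)⁻¹) : Spoly n) • koszulH (c k), ?_⟩
  have hk : ∀ k, koszulD n (Spoly n)
      ((C (((k + p : ℕ) : ℂ)⁻¹) : Spoly n) • koszulH (c k)) = c k := by
    intro k
    rw [map_smul, hH, ← mul_smul, ← C_mul]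
    by_cases hkp : k + p = 0
    · have : c k = 0 := by
        rw [show k = 0 by omega]; exact hc0 (by omega)
      rw [this, smul_zero]
    · rw [inv_mul_cancel₀ (by exact_mod_cast hkp), C_1, one_smul]
  rw [map_sum, Finset.sum_congr rfl fun k _ => hk k]
  funext s
  rw [Finset.sum_apply]
  conv_rhs => rw [← sum_homogeneousComponent (f s)]
  symm
  refine Finset.sum_subset ?_ ?_
  · rw [Finset.range_subset_range]
    exact Finset.le_sup (f := fun s => (f s).totalDegree + 1) (Finset.mem_univ s)
  · intro k _ hk
    exact homogeneousComponent_eq_zero _ _ (by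
      rw [Finset.mem_range] at hk; omega)

/-- Index set of the basis `e_s`, `|s| = p`, of `Λ^p(ℂⁿ)`. -/
abbrev KIdx (n p : ℕ) : Type := {s : Finset (Fin n) // s.card = p}

/-- Inclusion of the degree-`p` part `M ⊗ Λ^p` into `M ⊗ Λ`, extending by zero. -/
def kExt (n p : ℕ) (M : Type) [AddCommGroup M] [Module (Spoly n) M] :
    (KIdx n p → M) →ₗ[Spoly n] (Finset (Fin n) → M) :=
  LinearMap.pi fun s => if h : s.card = p then LinearMap.proj ⟨s, h⟩ else 0

/-- Projection of `M ⊗ Λ` onto the degree-`p` part `M ⊗ Λ^p`. -/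
def kRes (n p : ℕ) (M : Type) [AddCommGroup M] [Module (Spoly n) M] :
    (Finset (Fin n) → M) →ₗ[Spoly n] (KIdx n p → M) :=
  LinearMap.pi fun s => LinearMap.proj s.1

/-- The Koszul differential `M ⊗ Λ^{p+1} → M ⊗ Λ^p`. -/
def kD (n p : ℕ) (M : Type) [AddCommGroup M] [Module (Spoly n) M] :
    (KIdx n (p + 1) → M) →ₗ[Spoly n] (KIdx n p → M) :=
  kRes n p M ∘ₗ koszulD n M ∘ₗ kExt n (p + 1) M

section graded

variable {n p : ℕ} {M : Type} [AddCommGroup M] [Module (Spoly n) M]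

lemma kExt_of_card (f : KIdx n p → M) {s : Finset (Fin n)} (h : s.card = p) :
    kExt n p M f s = f ⟨s, h⟩ := by
  simp [kExt, h]

lemma kExt_of_card_ne (f : KIdx n p → M) {s : Finset (Fin n)} (h : s.card ≠ p) :
    kExt n p M f s = 0 := by
  simp [kExt, h]

lemma kRes_apply (f : Finset (Fin n) → M) (s : KIdx n p) : kRes n p M f s = f s.1 := rfl

lemma kRes_kExt (f : KIdx n p → M) : kRes n p M (kExt n p M f) = f := by
  funext s
  rw [kRes_apply, kExt_of_card _ s.2]

lemma kD_apply (f : KIdx n (p + 1) → M) (s : KIdx n p) :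
    kD n p M f s = ∑ i ∈ s.1ᶜ, koszulSign i s.1 • (X i : Spoly n) •
      kExt n (p + 1) M f (insert i s.1) := by
  simp only [kD, LinearMap.comp_apply, kRes_apply, koszulD_apply]

lemma kD_kRes (g : Finset (Fin n) → M) :
    kD n p M (kRes n (p + 1) M g) = kRes n p M (koszulD n M g) := by
  funext s
  rw [kD_apply, kRes_apply, koszulD_apply]
  refine Finset.sum_congr rfl fun i hi => ?_
  rw [kExt_of_card _ (by rw [Finset.card_insert_of_notMem (by simpa using hi), s.2]), kRes_apply]

lemma kExt_kD (f : KIdx n (p + 1) → M) :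
    kExt n p M (kD n p M f) = koszulD n M (kExt n (p + 1) M f) := by
  funext s
  by_cases h : s.card = p
  · rw [kExt_of_card _ h]; rfl
  · rw [kExt_of_card_ne _ h, koszulD_apply]
    symm
    refine Finset.sum_eq_zero fun i hi => ?_
    rw [kExt_of_card_ne _ (by rw [Finset.card_insert_of_notMem (by simpa using hi)]; omega)]
    simp

lemma kD_comp_kD : kD n p M ∘ₗ kD n (p + 1) M = 0 := by
  ext1 i
  refine LinearMap.ext fun x => ?_
  simp only [LinearMap.comp_apply]
  generalize LinearMap.single (Spoly n) (fun _ => M) i x = f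
  rw [← kRes_kExt (kD n p M _), kExt_kD, kExt_kD, koszulD_koszulD]
  simp

end graded

lemma kD_exact_succ (n p : ℕ) :
    Function.Exact (kD n (p + 1) (Spoly n)) (kD n p (Spoly n)) := by
  intro f
  constructor
  · intro hf
    obtain ⟨g, hg⟩ := koszulD_exact (p + 1) (kExt n (p + 1) (Spoly n) f)
      (fun s hs => kExt_of_card_ne f hs) (by rw [← kExt_kD, hf, map_zero]) (by simp)
    exact ⟨kRes n (p + 2) (Spoly n) g, by rw [kD_kRes, hg, kRes_kExt]⟩
  · rintro ⟨g, rfl⟩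
    exact LinearMap.congr_fun kD_comp_kD g

lemma CC_smul_def (n : ℕ) (r : Spoly n) (c : ℂ) :
    (r • (show CC n from c) : CC n) = (show CC n from (coeff 0 r * c : ℂ)) := by
  rw [← constantCoeff_eq, ← eval_zero]; rfl

/-- The augmentation `S ⊗ Λ^0 = S → ℂ` of the Koszul complex. -/
def kAug (n : ℕ) : (KIdx n 0 → Spoly n) →ₗ[Spoly n] CC n :=
  LinearMap.toSpanSingleton (Spoly n) (CC n) (show CC n from (1 : ℂ)) ∘ₗ
    LinearMap.proj (⟨∅, rfl⟩ : KIdx n 0)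

lemma kAug_apply (n : ℕ) (f : KIdx n 0 → Spoly n) :
    kAug n f = (show CC n from (coeff 0 (f ⟨∅, rfl⟩) : ℂ)) := by
  have h := CC_smul_def n (f ⟨∅, rfl⟩) 1
  rw [mul_one] at h
  exact h

lemma kAug_eq_zero_iff (n : ℕ) (f : KIdx n 0 → Spoly n) :
    kAug n f = 0 ↔ coeff 0 (f ⟨∅, rfl⟩) = 0 := by
  rw [kAug_apply]; rfl

lemma kAug_surjective (n : ℕ) : Function.Surjective (kAug n) := fun c =>
  ⟨fun _ => C (show ℂ from c), by rw [kAug_apply, coeff_zero_C]⟩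

lemma kD_exact_zero (n : ℕ) : Function.Exact (kD n 0 (Spoly n)) (kAug n) := by
  intro f
  constructor
  · intro hf
    obtain ⟨g, hg⟩ := koszulD_exact 0 (kExt n 0 (Spoly n) f)
      (fun s hs => kExt_of_card_ne f hs) (by
        funext s
        rw [koszulD_apply]
        refine Finset.sum_eq_zero fun i hi => ?_
        rw [kExt_of_card_ne _ (by simp)]
        simp) (fun _ => by
        rw [kExt_of_card f (Finset.card_empty)]
        exact (kAug_eq_zero_iff n f).1 hf)
    exact ⟨kRes n 1 (Spoly n) g, by rw [kD_kRes, hg, kRes_kExt]⟩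
  · rintro ⟨g, rfl⟩
    rw [kAug_eq_zero_iff, kD_apply, coeff_sum]
    refine Finset.sum_eq_zero fun i hi => ?_
    rw [smul_eq_mul, coeff_smul, coeff_X_mul']
    simp

/-! ### Tor through the Koszul resolution -/

/-- The Koszul complex `S ⊗ Λ^•` of `S`-modules. -/
def koszulComplex (n : ℕ) : ChainComplex (ModuleCat.{0} (Spoly n)) ℕ :=
  ChainComplex.of (fun p => ModuleCat.of (Spoly n) (KIdx n p → Spoly n))
    (fun p => ModuleCat.ofHom (kD n p (Spoly n)))
    (fun p => by
      rw [← ModuleCat.ofHom_comp, kD_comp_kD]; rfl)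

lemma koszulComplex_d (n p : ℕ) :
    (koszulComplex n).d (p + 1) p = ModuleCat.ofHom (kD n p (Spoly n)) := by
  simp [koszulComplex]

lemma koszulComplex_exactAt_succ (n p : ℕ) : (koszulComplex n).ExactAt (p + 1) := by
  rw [HomologicalComplex.exactAt_iff' _ (p + 1 + 1) (p + 1) p (by simp) (by simp),
    ShortComplex.ShortExact.moduleCat_exact_iff_function_exact]
  change Function.Exact ((koszulComplex n).d (p + 1 + 1) (p + 1)).hom
    ((koszulComplex n).d (p + 1) p).hom
  rw [koszulComplex_d, koszulComplex_d]
  exact kD_exact_succ n p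

/-- The Koszul complex as a projective resolution of `ℂ`. -/
def koszulResolution (n : ℕ) : ProjectiveResolution (ModuleCat.of (Spoly n) (CC n)) where
  complex := koszulComplex n
  projective p := inferInstanceAs (Projective (ModuleCat.of (Spoly n) (KIdx n p → Spoly n)))
  π := (ChainComplex.toSingle₀Equiv _ _).symm ⟨ModuleCat.ofHom (kAug n), by
    rw [koszulComplex_d]
    refine ModuleCat.hom_ext (LinearMap.ext fun f => ?_)
    exact (kD_exact_zero n).apply_apply_eq_zero f⟩
  quasiIso := ⟨fun p => by
    cases p with
    | zero =>
      rw [ChainComplex.quasiIsoAt₀_iff, ShortComplex.quasiIso_iff_of_zeros']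
      · constructor
        · rw [ShortComplex.ShortExact.moduleCat_exact_iff_function_exact]
          exact kD_exact_zero n
        · exact (ModuleCat.epi_iff_surjective _).2 (kAug_surjective n)
      all_goals rfl
    | succ p =>
      rw [quasiIsoAt_iff_exactAt']
      · exact koszulComplex_exactAt_succ n p
      · apply ChainComplex.exactAt_succ_single_obj⟩

open TensorProduct in
/-- Tensoring the Koszul complex of `S` with `M` gives the Koszul complex of `M`. -/
lemma piScalarRight_lTensor (n p : ℕ) (M : Type) [AddCommGroup M] [Module (Spoly n) M]
    (x : M ⊗[Spoly n] (KIdx n (p + 1) → Spoly n)) :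
    TensorProduct.piScalarRight (Spoly n) (Spoly n) M (KIdx n p)
        ((kD n p (Spoly n)).lTensor M x) =
      kD n p M (TensorProduct.piScalarRight (Spoly n) (Spoly n) M (KIdx n (p + 1)) x) := by
  induction x with
  | zero => simp only [map_zero]
  | add x y hx hy => simp only [map_add, hx, hy]
  | tmul m f =>
    rw [LinearMap.lTensor_tmul]
    funext J
    simp only [TensorProduct.piScalarRight_apply, TensorProduct.piScalarRightHom_tmul]
    rw [kD_apply, kD_apply, Finset.sum_smul]
    refine Finset.sum_congr rfl fun i hi => ?_
    have hc : (insert i J.1).card = p + 1 := by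
      rw [Finset.card_insert_of_notMem (by simpa using hi), J.2]
    rw [kExt_of_card _ hc, kExt_of_card _ hc, smul_assoc, smul_assoc]

/-- The functor `A ⊗_S -`. -/
abbrev tA (n : ℕ) : ModuleCat.{0} (Spoly n) ⥤ ModuleCat.{0} (Spoly n) :=
  (MonoidalCategory.tensoringLeft (ModuleCat.{0} (Spoly n))).obj (ModuleCat.of (Spoly n) (Aalg n))

/-- The part `A ⊗ Λ^{q+2} → A ⊗ Λ^{q+1} → A ⊗ Λ^q` of the Koszul complex of `A`. -/
def scA (n q : ℕ) : ShortComplex (ModuleCat.{0} (Spoly n)) :=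
  ShortComplex.mk (ModuleCat.ofHom (kD n (q + 1) (Aalg n))) (ModuleCat.ofHom (kD n q (Aalg n)))
    (by rw [← ModuleCat.ofHom_comp, kD_comp_kD]; rfl)

/-- `A ⊗_S (S ⊗ Λ^p) ≅ A ⊗ Λ^p`. -/
def cIso (n p : ℕ) :
    (tA n).obj ((koszulComplex n).X p) ≅ ModuleCat.of (Spoly n) (KIdx n p → Aalg n) :=
  (TensorProduct.piScalarRight (Spoly n) (Spoly n) (Aalg n) (KIdx n p)).toModuleIso

lemma cIso_comm (n p : ℕ) : (cIso n (p + 1)).hom ≫ ModuleCat.ofHom (kD n p (Aalg n)) =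
    (tA n).map ((koszulComplex n).d (p + 1) p) ≫ (cIso n p).hom := by
  rw [koszulComplex_d]
  refine ModuleCat.hom_ext (LinearMap.ext fun x => ?_)
  exact (piScalarRight_lTensor n p (Aalg n) x).symm

/-- `A ⊗_S (S ⊗ Λ^•) ≅ A ⊗ Λ^•` in degrees `q+2`, `q+1`, `q`. -/
def scIso (n q : ℕ) :
    (((tA n).mapHomologicalComplex _).obj (koszulComplex n)).sc' (q + 2) (q + 1) q ≅ scA n q :=
  ShortComplex.isoMk (S₁ := (((tA n).mapHomologicalComplex _).obj (koszulComplex n)).sc' _ _ _)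
    (S₂ := scA n q) (cIso n (q + 2)) (cIso n (q + 1)) (cIso n q)
    (cIso_comm n (q + 1)) (cIso_comm n q)

/-- `Tor_{q+1}(A, ℂ)` is the Koszul homology of `A` in degree `q + 1`. -/
def torIso (n q : ℕ) : TorModule n (q + 1) ≅ (scA n q).homology :=
  (koszulResolution n).isoLeftDerivedObj (tA n) (q + 1) ≪≫
    ShortComplex.homologyMapIso
      ((HomologicalComplex.isoSc' (((tA n).mapHomologicalComplex _).obj (koszulComplex n))
        (q + 2) (q + 1) q (by simp) (by simp)) ≪≫ scIso n q)

/-! ### Dimension count for the Koszul complex of `A` -/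

lemma mem_squaresIdeal_iff {n : ℕ} (f : Spoly n) :
    f ∈ squaresIdeal n ↔ coeff 0 f = 0 ∧ ∀ i, coeff (Finsupp.single i 1) f = 0 := by
  have hI : squaresIdeal n = Ideal.span ((fun m => monomial m (1 : ℂ)) ''
      {m : Fin n →₀ ℕ | ∃ i j, m = Finsupp.single i 1 + Finsupp.single j 1}) := by
    refine congrArg Ideal.span (Set.ext fun g => ?_)
    constructor
    · rintro ⟨i, j, rfl⟩
      exact ⟨_, ⟨i, j, rfl⟩, by simp [X, monomial_mul]⟩
    · rintro ⟨m, ⟨i, j, rfl⟩, rfl⟩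
      exact ⟨i, j, by simp [X, monomial_mul]⟩
  rw [hI, mem_ideal_span_monomial_image]
  constructor
  · intro h
    have key : ∀ m : Fin n →₀ ℕ, m.degree < 2 → coeff m f = 0 := by
      intro m hm
      by_contra hc
      obtain ⟨_, ⟨i, j, rfl⟩, hle⟩ := h m (mem_support_iff.2 hc)
      have := Finsupp.degree_mono hle
      simp at this
      omega
    exact ⟨key 0 (by simp), fun i => key _ (by simp)⟩
  · rintro ⟨h0, h1⟩ m hm
    rw [mem_support_iff] at hm
    have hm0 : m ≠ 0 := by rintro rfl; exact hm h0
    obtain ⟨i, hi⟩ := Finsupp.ne_iff.1 hm0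
    have hi' : Finsupp.single i 1 ≤ m := by
      rw [Finsupp.single_le_iff]; simp at hi; omega
    have hm1 : m - Finsupp.single i 1 ≠ 0 := by
      intro h
      apply hm
      rw [← tsub_add_cancel_of_le hi', h, zero_add]
      exact h1 i
    obtain ⟨j, hj⟩ := Finsupp.ne_iff.1 hm1
    refine ⟨_, ⟨j, i, rfl⟩, ?_⟩
    rw [← tsub_add_cancel_of_le hi']
    gcongr
    rw [Finsupp.single_le_iff]
    simp only [Finsupp.coe_zero, Pi.zero_apply] at hj
    omega

/-- The constant and linear coefficients of a polynomial. -/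
def jet (n : ℕ) : Spoly n →ₗ[ℂ] ℂ × (Fin n → ℂ) :=
  (lcoeff ℂ 0).prod (LinearMap.pi fun i => lcoeff ℂ (Finsupp.single i 1))

lemma jet_apply {n : ℕ} (f : Spoly n) :
    jet n f = (coeff 0 f, fun i => coeff (Finsupp.single i 1) f) := rfl

lemma jet_surjective (n : ℕ) : Function.Surjective (jet n) := by
  rintro ⟨c, v⟩
  refine ⟨C c + ∑ i, C (v i) * X i, ?_⟩
  rw [jet_apply]
  ext j
  · simp [coeff_sum]
  · simp [coeff_sum, coeff_C_mul, coeff_X, Finsupp.single_left_inj, coeff_C,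
      eq_comm (a := (0 : Fin n →₀ ℕ))]

lemma ker_jet (n : ℕ) :
    (squaresIdeal n).restrictScalars ℂ = LinearMap.ker (jet n) := by
  ext f
  rw [Submodule.restrictScalars_mem, mem_squaresIdeal_iff, LinearMap.mem_ker, jet_apply,
    Prod.mk_eq_zero, funext_iff]
  rfl

/-- The decomposition `A ≅ ℂ ⊕ V` into degrees `0` and `1`. -/
def aEquiv (n : ℕ) : Aalg n ≃ₗ[ℂ] ℂ × (Fin n → ℂ) :=
  (Submodule.Quotient.restrictScalarsEquiv ℂ (squaresIdeal n)).symm ≪≫ₗ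
    Submodule.quotEquivOfEq _ _ (ker_jet n) ≪≫ₗ
    (jet n).quotKerEquivOfSurjective (jet_surjective n)

lemma aEquiv_mk {n : ℕ} (f : Spoly n) :
    aEquiv n (Ideal.Quotient.mk (squaresIdeal n) f) = jet n f := rfl

lemma aEquiv_X_smul {n : ℕ} (i : Fin n) (a : Aalg n) :
    aEquiv n ((X i : Spoly n) • a) = (0, Pi.single i (aEquiv n a).1) := by
  obtain ⟨f, rfl⟩ := Ideal.Quotient.mk_surjective a
  have : (X i : Spoly n) • Ideal.Quotient.mk (squaresIdeal n) f =
    Ideal.Quotient.mk (squaresIdeal n) (X i * f) := rfl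
  rw [this, aEquiv_mk, aEquiv_mk, jet_apply, jet_apply]
  ext j
  · simp [coeff_X_mul']
  · by_cases h : i = j
    · subst h
      simp [coeff_X_mul']
    · simp [coeff_X_mul', h, Ne.symm h]

instance (n : ℕ) : Module.Finite ℂ (Aalg n) := Module.Finite.equiv (aEquiv n).symm

lemma card_KIdx (n p : ℕ) : Fintype.card (KIdx n p) = n.choose p := by
  simp [KIdx]

lemma finrank_chains (n p : ℕ) :
    Module.finrank ℂ (KIdx n p → Aalg n) = (n + 1) * n.choose p := by
  have : Module.finrank ℂ (Aalg n) = n + 1 := by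
    rw [(aEquiv n).finrank_eq, Module.finrank_prod]; simp [add_comm]
  rw [Module.finrank_pi_fintype]
  simp [this, mul_comm]

/-- The projection `A ⊗ Λ^p → A₀ ⊗ Λ^p = Λ^p` to the constant term. -/
def degZero (n p : ℕ) : (KIdx n p → Aalg n) →ₗ[ℂ] (KIdx n p → ℂ) :=
  LinearMap.pi fun s => LinearMap.fst ℂ _ _ ∘ₗ (aEquiv n).toLinearMap ∘ₗ LinearMap.proj s

lemma degZero_surjective (n p : ℕ) : Function.Surjective (degZero n p) := fun v =>
  ⟨fun s => (aEquiv n).symm (v s, 0), by funext s; simp [degZero]⟩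

/-- The Koszul differential of `A` kills `V ⊗ Λ^{p+1}` and is injective on `A₀ ⊗ Λ^{p+1}`: the
coefficient of `x_i` in the component at `J` is, up to sign, the constant term at `J ∪ {i}`, and
every set of size `p + 1` is of the form `J ∪ {i}`. -/
lemma ker_kD (n p : ℕ) :
    LinearMap.ker ((kD n p (Aalg n)).restrictScalars ℂ) = LinearMap.ker (degZero n (p + 1)) := by
  ext f
  rw [LinearMap.mem_ker, LinearMap.mem_ker, LinearMap.restrictScalars_apply]
  have key : ∀ J : KIdx n p, aEquiv n (kD n p (Aalg n) f J) = ∑ i ∈ J.1ᶜ,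
      (0, Pi.single i (koszulSign i J.1 •
        (aEquiv n (kExt n (p + 1) (Aalg n) f (insert i J.1))).1)) := by
    intro J
    rw [kD_apply, map_sum]
    refine Finset.sum_congr rfl fun i _ => ?_
    rw [map_zsmul, aEquiv_X_smul, Prod.smul_mk, smul_zero, Pi.single_smul]
  constructor
  · intro h
    funext s
    obtain ⟨i, hi⟩ : s.1.Nonempty := Finset.card_pos.1 (by rw [s.2]; omega)
    have hc : (s.1.erase i).card = p := by rw [Finset.card_erase_of_mem hi, s.2]; omega
    have hJ := congrArg (fun v => v.2 i) (key ⟨s.1.erase i, hc⟩)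
    rw [h] at hJ
    simp only [Pi.zero_apply, map_zero, Prod.snd_zero, Prod.snd_sum, Finset.sum_apply] at hJ
    rw [Finset.sum_eq_single i (fun j _ hj => by simp [Ne.symm hj]) (fun hn => by simp at hn),
      Pi.single_eq_same, Finset.insert_erase hi, kExt_of_card f s.2] at hJ
    have h2 := congrArg (fun z => koszulSign i (s.1.erase i) • z) hJ.symm
    simp only [← mul_smul, koszulSign_mul_self, smul_zero, one_smul] at h2
    exact h2
  · intro h
    funext J
    apply (aEquiv n).injective
    rw [key, Pi.zero_apply, map_zero]
    refine Finset.sum_eq_zero fun i hi => ?_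
    have hc : (insert i J.1).card = p + 1 := by
      rw [Finset.card_insert_of_notMem (by simpa using hi), J.2]
    have : (aEquiv n (f ⟨_, hc⟩)).1 = 0 := congrFun h ⟨_, hc⟩
    rw [kExt_of_card f hc, this]
    simp

lemma finrank_ker_kD (n p : ℕ) :
    Module.finrank ℂ (LinearMap.ker ((kD n p (Aalg n)).restrictScalars ℂ)) =
      n * n.choose (p + 1) := by
  have h := (degZero n (p + 1)).finrank_range_add_finrank_ker
  rw [LinearMap.range_eq_top.2 (degZero_surjective n (p + 1)), finrank_top, finrank_chains,
    Module.finrank_fintype_fun_eq_card, card_KIdx] at h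
  rw [ker_kD]
  linarith

lemma finrank_range_kD (n p : ℕ) :
    Module.finrank ℂ (LinearMap.range ((kD n p (Aalg n)).restrictScalars ℂ)) =
      n.choose (p + 1) := by
  have h := ((kD n p (Aalg n)).restrictScalars ℂ).finrank_range_add_finrank_ker
  rw [finrank_ker_kD, finrank_chains] at h
  linarith

lemma choose_identity (n q : ℕ) :
    (q + 1) * (n + 1).choose (q + 2) + n.choose (q + 2) = n * n.choose (q + 1) := by
  have h := Nat.choose_succ_right_eq n (q + 1)
  rw [Nat.choose_succ_succ' n (q + 1)]
  by_cases hq : q + 1 ≤ n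
  · obtain ⟨k, rfl⟩ := Nat.exists_eq_add_of_le hq
    rw [Nat.add_sub_cancel_left] at h
    linarith
  · rw [Nat.choose_eq_zero_of_lt (by omega : n < q + 1),
      Nat.choose_eq_zero_of_lt (by omega : n < q + 1 + 1)]
    simp

/-! ### Conclusion -/

instance (n p : ℕ) : IsScalarTower ℂ (Spoly n) (TorModule n p) :=
  ⟨fun c f x => by
    change (c • f) • x = (algebraMap ℂ (Spoly n) c) • (f • x)
    rw [Algebra.smul_def, mul_smul]⟩

lemma exists_cycles_map_of_iso {R : Type} [Ring R] (K : ShortComplex (ModuleCat.{0} R))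
    {T : ModuleCat.{0} R} (i : T ≅ K.homology) :
    ∃ π : LinearMap.ker K.g.hom →ₗ[R] T,
      Function.Surjective π ∧ ∀ z, π z = 0 ↔ z.1 ∈ LinearMap.range K.f.hom := by
  let e : T ≃ₗ[R] (LinearMap.ker K.g.hom ⧸ LinearMap.range K.moduleCatToCycles) :=
    (i ≪≫ K.moduleCatHomologyIso).toLinearEquiv
  refine ⟨e.symm.toLinearMap ∘ₗ (LinearMap.range K.moduleCatToCycles).mkQ,
    e.symm.surjective.comp (Submodule.mkQ_surjective _), fun z => ?_⟩
  rw [LinearMap.comp_apply, LinearEquiv.coe_coe, LinearEquiv.map_eq_zero_iff,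
    Submodule.mkQ_apply, Submodule.Quotient.mk_eq_zero]
  constructor
  · rintro ⟨y, hy⟩
    exact ⟨y, congrArg Subtype.val hy⟩
  · rintro ⟨y, hy⟩
    exact ⟨y, Subtype.ext hy⟩

/-- `Tor_{q+1}(A, ℂ)` is the quotient of the Koszul cycles of `A` by the boundaries. -/
lemma exists_cycles_map (n q : ℕ) :
    ∃ π : LinearMap.ker (kD n q (Aalg n)) →ₗ[Spoly n] TorModule n (q + 1),
      Function.Surjective π ∧ ∀ z, π z = 0 ↔ z.1 ∈ LinearMap.range (kD n (q + 1) (Aalg n)) :=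
  exists_cycles_map_of_iso (scA n q) (torIso n q)

/-- Syzygies of the most singular commutative quadratic algebra `A = S(V)/(S²V)`:
for `p ≥ 1`, `Tor_p^S(A, ℂ)` is finite-dimensional over `ℂ` of dimension
`p · C(n+1, p+1)`, the dimension of the irreducible `GL_n`-module of the
hook Young diagram `[2, 1^{p−1}]`. -/
theorem syzygies_most_singular_quadratic_algebra (n p : ℕ) (hn : 0 < n) (hp : 1 ≤ p) :
    FiniteDimensional ℂ (TorModule n p) ∧
      Module.finrank ℂ (TorModule n p) = p * Nat.choose (n + 1) (p + 1) := by
  obtain ⟨q, rfl⟩ := Nat.exists_eq_add_of_le' hp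
  obtain ⟨π, hπ, hker⟩ := exists_cycles_map n q
  let πc : LinearMap.ker ((kD n q (Aalg n)).restrictScalars ℂ) →ₗ[ℂ] TorModule n (q + 1) :=
    π.restrictScalars ℂ
  have hπc : Function.Surjective πc := hπ
  have hfin : FiniteDimensional ℂ (TorModule n (q + 1)) := Module.Finite.of_surjective πc hπc
  refine ⟨hfin, ?_⟩
  have hle : LinearMap.range ((kD n (q + 1) (Aalg n)).restrictScalars ℂ) ≤
      LinearMap.ker ((kD n q (Aalg n)).restrictScalars ℂ) := by
    rintro _ ⟨y, rfl⟩
    exact LinearMap.congr_fun (kD_comp_kD (M := Aalg n)) y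
  have hk : LinearMap.ker πc =
      (LinearMap.range ((kD n (q + 1) (Aalg n)).restrictScalars ℂ)).submoduleOf
        (LinearMap.ker ((kD n q (Aalg n)).restrictScalars ℂ)) := by
    ext z
    exact hker z
  have h := πc.finrank_range_add_finrank_ker
  rw [LinearMap.range_eq_top.2 hπc, finrank_top, hk,
    (Submodule.submoduleOfEquivOfLe hle).finrank_eq, finrank_ker_kD, finrank_range_kD] at h
  have hc := choose_identity n q
  change _ = (q + 1) * (n + 1).choose (q + 2)
  linarith

end
end
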